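/- There exist constants η > 0 and C > 0 such that for every n and every prime p with 2 < p ≤ exp(η·n^{1/4}): |E[#{λ ∈ F_p : det_{F_p}(M_n − λ·I_n) = 0}] − 1| ≤ C/p. That is, the expected number of roots in F_p (counted without multiplicity) of the characteristic polynomial of M_n reduced mod p equals 1 + O(1/p). -/

import Mathlib

open Finset

noncomputable section

/-- The sign `±1` associated to a Boolean. -/
def signb (R : Type*) [Ring R] (b : Bool) : R := if b then 1 else -1

open Classical in
/-- Uniform/counting probability of an event on a finite sample space. -/
def prob {Ω : Type*} [Fintype Ω] (E : Ω → Prop) : ℝ :=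
  ((Finset.univ.filter E).card : ℝ) / (Fintype.card Ω : ℝ)

/-- The symmetric random sign matrix determined by the Boolean data `ω`
(only the entries `ω i j` with `i ≤ j` are used); it is uniformly distributed
over symmetric `±1` matrices when `ω` is uniform. -/
def symMat (R : Type*) [Ring R] {n : ℕ} (ω : Fin n → Fin n → Bool) :
    Matrix (Fin n) (Fin n) R :=
  Matrix.of fun i j => signb R (ω (min i j) (max i j))

/-- Atom probability of a vector over `ZMod p` w.r.t. i.i.d. Rademacher signs. -/
def rho (p : ℕ) {ι : Type*} [Fintype ι] [DecidableEq ι] (w : ι → ZMod p) : ℝ :=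
  ⨆ r : ZMod p, prob (fun ξ : ι → Bool => ∑ i, signb (ZMod p) (ξ i) * w i = r)

/-- Discrepancy of a vector over `ZMod p` w.r.t. i.i.d. Rademacher signs. -/
def disc (p : ℕ) {ι : Type*} [Fintype ι] [DecidableEq ι] (w : ι → ZMod p) : ℝ :=
  ⨆ x : ZMod p,
    |prob (fun ξ : ι → Bool => ∑ i, signb (ZMod p) (ξ i) * w i = x) - 1 / (p : ℝ)|

open Finset
noncomputable section

open scoped BigOperators

open Classical in
/-- probability as an expectation -/
def Pr {Ω : Type*} [Fintype Ω] (E : Ω → Prop) : ℝ := 𝔼 ω, if E ω then (1:ℝ) else 0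

lemma Pr_nonneg {Ω : Type*} [Fintype Ω] (E : Ω → Prop) : 0 ≤ Pr E := by
  unfold Pr
  exact expect_nonneg (fun i _ => by split_ifs <;> norm_num)

lemma Pr_mono {Ω : Type*} [Fintype Ω] {E F : Ω → Prop} (h : ∀ ω, E ω → F ω) : Pr E ≤ Pr F := by
  unfold Pr
  apply expect_le_expect
  intro i _
  by_cases h1 : E i
  · simp [h1, h i h1]
  · simp only [h1, if_false]; split_ifs <;> norm_num

lemma Pr_le_one {Ω : Type*} [Fintype Ω] [Nonempty Ω] (E : Ω → Prop) : Pr E ≤ 1 := by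
  unfold Pr
  apply expect_le univ_nonempty
  intro i _
  split_ifs <;> norm_num

lemma Pr_or_le {Ω : Type*} [Fintype Ω] (E F : Ω → Prop) : Pr (fun ω => E ω ∨ F ω) ≤ Pr E + Pr F := by
  unfold Pr
  rw [← expect_add_distrib]
  apply expect_le_expect
  intro i _
  by_cases h1 : E i <;> by_cases h2 : F i <;> simp [h1, h2]

lemma Pr_exists_le {Ω ι : Type*} [Fintype Ω] (s : Finset ι) (E : ι → Ω → Prop) :
    Pr (fun ω => ∃ i ∈ s, E i ω) ≤ ∑ i ∈ s, Pr (E i) := by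
  classical
  unfold Pr
  rw [← expect_sum_comm]
  apply expect_le_expect
  intro ω _
  split_ifs with h
  · obtain ⟨i, hi, h⟩ := h
    refine le_trans (le_of_eq ?_) (single_le_sum (fun j _ => by split_ifs <;> norm_num) hi)
    simp [h]
  · exact sum_nonneg (fun j _ => by split_ifs <;> norm_num)

lemma Pr_congr {Ω : Type*} [Fintype Ω] {E F : Ω → Prop} (h : ∀ ω, E ω ↔ F ω) : Pr E = Pr F :=
  le_antisymm (Pr_mono fun ω => (h ω).1) (Pr_mono fun ω => (h ω).2)

lemma Pr_le_of {Ω : Type*} [Fintype Ω] {E : Ω → Prop} {c : Prop} {b : ℝ} (hb : 0 ≤ b)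
    (h : c → Pr E ≤ b) (h' : ∀ ω, E ω → c) : Pr E ≤ b := by
  by_cases hc : c
  · exact h hc
  · have : Pr E = 0 := by
      unfold Pr
      apply expect_eq_zero
      intro i _
      have : ¬ E i := fun h => hc (h' i h)
      simp [this]
    rw [this]; exact hb

/-- independence for products -/
lemma expect_pi_prod {ι κ K : Type*} [Fintype ι] [DecidableEq ι] [Fintype κ] [Field K] [CharZero K]
    (f : ι → κ → K) : 𝔼 x : ι → κ, ∏ i, f i (x i) = ∏ i, 𝔼 b, f i b := by
  simp only [Fintype.expect_eq_sum_div_card, prod_div_distrib, Fintype.card_fun]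
  rw [prod_univ_sum]
  simp

section chars
variable {p : ℕ} [Fact p.Prime]

/-- standard character -/
def ch (a : ZMod p) : ℂ := ZMod.stdAddChar a

def cs (a : ZMod p) : ℂ := (ch a + ch (-a)) / 2
def cn (a : ZMod p) : ℝ := ‖cs a‖
def tau (a : ZMod p) : ℝ := ‖1 - ch (2 * a)‖

lemma ch_add (a b : ZMod p) : ch (a + b) = ch a * ch b := AddChar.map_add_eq_mul _ _ _
lemma ch_zero : ch (0 : ZMod p) = 1 := AddChar.map_zero_eq_one _
lemma ch_norm (a : ZMod p) : ‖ch a‖ = 1 := by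
  exact Circle.norm_coe _
lemma ch_neg (a : ZMod p) : ch (-a) = (starRingEnd ℂ) (ch a) := by
  have h1 : ch (-a) = (ch a)⁻¹ := AddChar.map_neg_eq_inv _ _
  rw [h1, Complex.inv_def, Complex.normSq_eq_norm_sq, ch_norm]; simp
lemma ch_sum {ι : Type*} (s : Finset ι) (f : ι → ZMod p) : ch (∑ i ∈ s, f i) = ∏ i ∈ s, ch (f i) :=
  by
  classical
  induction s using Finset.induction_on with
  | empty => simp [ch_zero]
  | insert a s ha ih => rw [sum_insert ha, prod_insert ha, ch_add, ih]
lemma ch_sum_mul (b : ZMod p) : ∑ t : ZMod p, ch (t * b) = if b = 0 then (p : ℂ) else 0 := by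
  have := AddChar.sum_mulShift (R' := ℂ) b (ZMod.isPrimitive_stdAddChar p)
  unfold ch
  rw [this]; split_ifs <;> simp [ZMod.card]

lemma cn_sq (a : ZMod p) : cn a ^ 2 = 1 - tau a ^ 2 / 4 := by
  unfold cn tau cs
  rw [two_mul, ch_add, ch_neg]
  have h := ch_norm a
  generalize ch a = z at *
  have h2 : z.re ^ 2 + z.im ^ 2 = 1 := by
    have := Complex.sq_norm z
    rw [h, Complex.normSq_apply] at this
    nlinarith
  rw [Complex.sq_norm, Complex.sq_norm, Complex.normSq_apply, Complex.normSq_apply]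
  have e1 : ((z + (starRingEnd ℂ) z) / 2) = (z.re : ℂ) := by
    rw [Complex.add_conj]; push_cast; ring
  rw [e1]
  simp
  have : z.re^2 = 1 - z.im^2 := by linarith
  have h4 : z.re^4 = (1 - z.im^2)^2 := by rw [← this]; ring
  nlinarith

lemma cn_nonneg (a : ZMod p) : 0 ≤ cn a := norm_nonneg _
lemma tau_nonneg (a : ZMod p) : 0 ≤ tau a := norm_nonneg _
lemma cn_le_one (a : ZMod p) : cn a ≤ 1 := by
  have := cn_sq a
  have h2 := cn_nonneg a
  nlinarith [sq_nonneg (tau a)]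
lemma tau_le_two (a : ZMod p) : tau a ≤ 2 := by
  have := cn_sq a
  have h2 := tau_nonneg a
  nlinarith [sq_nonneg (cn a)]
lemma cn_le_exp (a : ZMod p) : cn a ≤ Real.exp (-(tau a ^ 2 / 8)) := by
  have h : cn a ^ 2 ≤ Real.exp (-(tau a ^ 2 / 8)) ^ 2 := by
    rw [cn_sq, ← Real.exp_nat_mul]
    have := Real.add_one_le_exp (-(tau a ^ 2 / 4))
    have e : ((2:ℕ):ℝ) * -(tau a ^ 2 / 8) = -(tau a ^ 2 / 4) := by push_cast; ring
    rw [e]; linarith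
  exact le_of_sq_le_sq h (Real.exp_pos _).le
lemma tau_zero : tau (0 : ZMod p) = 0 := by simp [tau, ch_zero]
lemma tau_add (a b : ZMod p) : tau (a + b) ≤ tau a + tau b := by
  unfold tau
  have : 1 - ch (2 * (a + b)) = (1 - ch (2 * a)) + ch (2*a) * (1 - ch (2 * b)) := by
    rw [mul_add, ch_add]; ring
  rw [this]
  refine (norm_add_le _ _).trans ?_
  rw [norm_mul, ch_norm, one_mul]
lemma prod_cn_le {ι : Type*} (s : Finset ι) (w : ι → ZMod p) :
    ∏ i ∈ s, cn (w i) ≤ Real.exp (-((∑ i ∈ s, tau (w i) ^ 2) / 8)) := by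
  have : Real.exp (-((∑ i ∈ s, tau (w i) ^ 2) / 8)) = ∏ i ∈ s, Real.exp (-(tau (w i) ^ 2 / 8)) := by
    rw [← Real.exp_sum]; congr 1; rw [sum_div, sum_neg_distrib]
  rw [this]
  exact prod_le_prod (fun i _ => cn_nonneg _) (fun i _ => cn_le_exp _)

abbrev sg (b : Bool) : ZMod p := signb (ZMod p) b

lemma expect_ch {ι : Type*} [Fintype ι] [DecidableEq ι] (J : Finset ι) (w : ι → ZMod p) :
    𝔼 x : ι → Bool, ch (∑ i ∈ J, sg (x i) * w i) = ∏ i ∈ J, cs (w i) := by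
  have h : ∀ x : ι → Bool, ch (∑ i ∈ J, sg (x i) * w i)
      = ∏ i, (fun i b => if i ∈ J then ch (sg b * w i) else 1) i (x i) := by
    intro x
    rw [ch_sum, prod_ite_mem]; simp
  rw [expect_congr rfl (fun x _ => h x), expect_pi_prod (fun i b => if i ∈ J then ch (sg b * w i) else 1), ← prod_subset (subset_univ J)]
  · apply prod_congr rfl
    intro i hi
    rw [Fintype.expect_eq_sum_div_card]; simp [hi, cs, signb]
  · intro i _ hi
    simp [hi]

open Classical in
lemma Pr_fourier {Ω : Type*} [Fintype Ω] (X : Ω → ZMod p) (c : ZMod p) :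
    ((Pr (fun ω => X ω = c) : ℝ) : ℂ) = (∑ t : ZMod p, ch (-(t * c)) * 𝔼 ω, ch (t * X ω)) / p := by
  have hp : (p : ℂ) ≠ 0 := by exact_mod_cast (Fact.out : p.Prime).ne_zero
  unfold Pr
  rw [Complex.ofReal_expect]
  trans 𝔼 ω, (∑ t : ZMod p, ch (-(t * c)) * ch (t * X ω)) / (p:ℂ)
  · apply expect_congr rfl
    intro ω _
    have : ∀ t : ZMod p, ch (-(t * c)) * ch (t * X ω) = ch (t * (X ω - c)) := by
      intro t; rw [← ch_add]; congr 1; ring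
    rw [sum_congr rfl (fun t _ => this t), ch_sum_mul]
    by_cases hx : X ω = c
    · simp [hx, hp]
    · simp [hx, sub_eq_zero]
  rw [← expect_div, expect_sum_comm]
  congr 1
  exact sum_congr rfl fun t _ => by rw [mul_expect]

lemma Pr_lin_le {ι : Type*} [Fintype ι] [DecidableEq ι] (J : Finset ι) (w : ι → ZMod p) (c : ZMod p) :
    Pr (fun x : ι → Bool => ∑ i ∈ J, sg (x i) * w i = c) ≤ (∑ t : ZMod p, ∏ i ∈ J, cn (t * w i)) / p := by
  have h := Pr_fourier (fun x : ι → Bool => ∑ i ∈ J, sg (x i) * w i) c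
  have h2 : ∀ t : ZMod p, 𝔼 x : ι → Bool, ch (t * ∑ i ∈ J, sg (x i) * w i) = ∏ i ∈ J, cs (t * w i) := by
    intro t
    rw [← expect_ch]
    apply expect_congr rfl
    intro x _
    congr 1
    rw [mul_sum]
    exact sum_congr rfl fun i _ => by ring
  have h3 : Pr (fun x : ι → Bool => ∑ i ∈ J, sg (x i) * w i = c)
    = ‖((Pr (fun x : ι → Bool => ∑ i ∈ J, sg (x i) * w i = c) : ℝ) : ℂ)‖ := by
    rw [Complex.norm_real, Real.norm_of_nonneg (Pr_nonneg _)]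
  rw [h3, h, norm_div, Complex.norm_natCast]
  gcongr
  refine (norm_sum_le _ _).trans ?_
  apply sum_le_sum
  intro t _
  rw [norm_mul, ch_norm, one_mul, h2, norm_prod]
  rfl

/-- Two sided bound from character sums. -/
lemma Pr_close {Ω : Type*} [Fintype Ω] [Nonempty Ω] (X : Ω → ZMod p) (c : ZMod p) (δ : ℝ)
    (h : ∀ t : ZMod p, t ≠ 0 → ‖𝔼 ω, ch (t * X ω)‖ ≤ δ) (hδ : 0 ≤ δ) :
    |Pr (fun ω => X ω = c) - 1 / p| ≤ δ := by
  have hp : (p : ℝ) ≠ 0 := by exact_mod_cast (Fact.out : p.Prime).ne_zero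
  have hp0 : (0:ℝ) < p := by positivity
  have h1 := Pr_fourier X c
  classical
  rw [← add_sum_erase _ _ (mem_univ (0 : ZMod p))] at h1
  simp only [zero_mul, neg_zero, ch_zero, one_mul, Fintype.expect_const] at h1
  have h2 : (((Pr (fun ω => X ω = c) - 1 / p : ℝ)) : ℂ) = (∑ t ∈ univ.erase (0 : ZMod p), ch (-(t * c)) * 𝔼 ω, ch (t * X ω)) / p := by
    push_cast
    rw [h1]; ring
  rw [← Real.norm_eq_abs, ← Complex.norm_real, h2, norm_div, Complex.norm_natCast, div_le_iff₀ hp0]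
  refine (norm_sum_le _ _).trans ?_
  calc _ ≤ ∑ t ∈ univ.erase (0 : ZMod p), δ := by
        apply sum_le_sum
        intro t ht
        rw [norm_mul, ch_norm, one_mul]
        exact h t (ne_of_mem_erase ht)
    _ ≤ _ := by
        rw [sum_const, card_erase_of_mem (mem_univ _), card_univ, ZMod.card, nsmul_eq_mul, mul_comm]
        gcongr
        exact Nat.sub_le _ _

end chars
end

open Finset
noncomputable section
open scoped BigOperators

variable {p : ℕ} [Fact p.Prime]

/-- shifted matrix -/
def shM {n : ℕ} (lam : ZMod p) (ω : Fin n → Fin n → Bool) : Matrix (Fin n) (Fin n) (ZMod p) :=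
  symMat (ZMod p) ω - lam • (1 : Matrix (Fin n) (Fin n) (ZMod p))

lemma shM_symm {n : ℕ} (lam : ZMod p) (ω : Fin n → Fin n → Bool) (i j : Fin n) :
    shM lam ω i j = shM lam ω j i := by
  simp [shM, symMat, Matrix.one_apply, min_comm, max_comm, eq_comm]

def mixA {n : ℕ} (J : Finset (Fin n)) (ω ζ : Fin n → Fin n → Bool) : Fin n → Fin n → Bool :=
  fun a b => if a ≤ b ∧ a ∉ J ∧ b ∈ J then ζ a b else if a ≤ b ∧ a ∈ J ∧ b ∉ J then ζ b a else ω a b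
def mixB {n : ℕ} (J : Finset (Fin n)) (ω ζ : Fin n → Fin n → Bool) : Fin n → Fin n → Bool :=
  fun i j => if i ∉ J ∧ j ∈ J then ω (min i j) (max i j) else ζ i j

lemma mixAA {n : ℕ} (J : Finset (Fin n)) (ω ζ : Fin n → Fin n → Bool) :
    mixA J (mixA J ω ζ) (mixB J ω ζ) = ω := by
  funext a b
  unfold mixA mixB
  rcases le_or_gt a b with h | h
  · by_cases ha : a ∈ J <;> by_cases hb : b ∈ J <;> simp [ha, hb, h]
  · by_cases ha : a ∈ J <;> by_cases hb : b ∈ J <;> simp [ha, hb, not_le.2 h]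
lemma mixBB {n : ℕ} (J : Finset (Fin n)) (ω ζ : Fin n → Fin n → Bool) :
    mixB J (mixA J ω ζ) (mixB J ω ζ) = ζ := by
  funext a b
  unfold mixA mixB
  rcases le_total a b with h | h <;>
  by_cases ha : a ∈ J <;> by_cases hb : b ∈ J <;> simp [ha, hb, h]

def mixEquiv {n : ℕ} (J : Finset (Fin n)) :
    ((Fin n → Fin n → Bool) × (Fin n → Fin n → Bool)) ≃ ((Fin n → Fin n → Bool) × (Fin n → Fin n → Bool)) where
  toFun q := (mixA J q.1 q.2, mixB J q.1 q.2)
  invFun q := (mixA J q.1 q.2, mixB J q.1 q.2)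
  left_inv q := by simp [mixAA, mixBB]
  right_inv q := by simp [mixAA, mixBB]

lemma expect_prod_univ {α β : Type*} [Fintype α] [Fintype β] (f : α × β → ℝ) :
    𝔼 q : α × β, f q = 𝔼 a, 𝔼 b, f (a, b) := by
  rw [← univ_product_univ, expect_product]

lemma expect_mixA {n : ℕ} (J : Finset (Fin n)) (f : (Fin n → Fin n → Bool) → ℝ) :
    𝔼 ω, f ω = 𝔼 ω, 𝔼 ζ, f (mixA J ω ζ) := by
  have h1 : 𝔼 ω, f ω = 𝔼 q : (Fin n → Fin n → Bool) × (Fin n → Fin n → Bool), f q.1 := by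
    rw [expect_prod_univ]
    apply expect_congr rfl
    intro ω _
    simp
  have h2 : 𝔼 q : (Fin n → Fin n → Bool) × (Fin n → Fin n → Bool), f q.1 =
    𝔼 q : (Fin n → Fin n → Bool) × (Fin n → Fin n → Bool), f (mixA J q.1 q.2) := by
    symm
    exact Fintype.expect_equiv (mixEquiv J) _ _ (fun q => rfl)
  rw [h1, h2, expect_prod_univ]

lemma Pr_pi_all {ι κ : Type*} [Fintype ι] [DecidableEq ι] [Fintype κ] (E : ι → κ → Prop) :
    Pr (fun x : ι → κ => ∀ i, E i (x i)) = ∏ i, Pr (E i) := by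
  classical
  unfold Pr
  rw [← expect_pi_prod]
  apply expect_congr rfl
  intro x _
  by_cases h : ∀ i, E i (x i)
  · simp [h]
  · rw [if_neg h]
    push Not at h
    obtain ⟨i, hi⟩ := h
    symm
    exact prod_eq_zero (mem_univ i) (by simp [hi])

lemma Pr_true {Ω : Type*} [Fintype Ω] [Nonempty Ω] : Pr (fun _ : Ω => True) = 1 := by
  unfold Pr; simp

lemma Pr_mulVec_le {n : ℕ} (lam : ZMod p) (J : Finset (Fin n)) (w u : Fin n → ZMod p) (ρ : ℝ)
    (hρ : ∀ c, Pr (fun x : Fin n → Bool => ∑ i ∈ J, sg (x i) * w i = c) ≤ ρ) :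
    Pr (fun ω : Fin n → Fin n → Bool => (shM lam ω).mulVec w = u) ≤ ρ ^ (n - J.card) := by
  have hρ0 : 0 ≤ ρ := (Pr_nonneg _).trans (hρ 0)
  unfold Pr
  rw [expect_mixA J]
  apply expect_le univ_nonempty
  intro ω _
  set c : Fin n → ZMod p := fun i => u i - ∑ j ∈ univ \ J, shM lam ω i j * w j with hc
  have key : ∀ ζ : Fin n → Fin n → Bool, (shM lam (mixA J ω ζ)).mulVec w = u →
      ∀ i, (fun i (x : Fin n → Bool) => i ∉ J → ∑ j ∈ J, sg (x j) * w j = c i) i (ζ i) := by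
    intro ζ h i hi
    have h1 := congrFun h i
    simp only [Matrix.mulVec, dotProduct] at h1
    rw [← sum_sdiff (subset_univ J)] at h1
    rw [hc]
    simp only
    rw [← h1, eq_sub_iff_add_eq, add_comm]
    congr 1
    · apply sum_congr rfl
      intro j hj
      have hj : j ∉ J := by simpa using hj
      congr 1
      rcases le_total i j with h | h <;> simp [shM, symMat, mixA, hi, hj, h]
    · apply sum_congr rfl
      intro j hj
      congr 1
      have hne : i ≠ j := fun h => hi (h ▸ hj)
      rcases le_total i j with h | h <;> simp [shM, symMat, mixA, hi, hj, h, hne]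
  have h2 := Pr_mono key
  rw [Pr_pi_all (fun i (x : Fin n → Bool) => i ∉ J → ∑ j ∈ J, sg (x j) * w j = c i)] at h2
  refine h2.trans ?_
  rw [← prod_sdiff (subset_univ J)]
  have h3 : ∏ i ∈ J, Pr (fun (x : Fin n → Bool) => i ∉ J → ∑ j ∈ J, sg (x j) * w j = c i) = 1 := by
    apply prod_eq_one
    intro i hi
    rw [← Pr_true (Ω := Fin n → Bool)]
    exact Pr_congr fun x => by simp [hi]
  rw [h3, mul_one]
  calc _ ≤ ∏ i ∈ univ \ J, ρ := by
        apply prod_le_prod (fun _ _ => Pr_nonneg _)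
        intro i hi
        have hi : i ∉ J := by simpa using hi
        refine le_trans (Pr_mono fun x hx => hx hi) (hρ (c i))
    _ = _ := by
        rw [prod_const, card_sdiff_of_subset (subset_univ J), card_univ, Fintype.card_fin]

/-- single coordinate bound -/
lemma Pr_single_le {n : ℕ} (hp : p ≠ 2) (w : Fin n → ZMod p) (i : Fin n) (hi : w i ≠ 0) (c : ZMod p) :
    Pr (fun x : Fin n → Bool => ∑ i ∈ {i}, sg (x i) * w i = c) ≤ 1 / 2 := by
  have h := Pr_pi_all (ι := Fin n) (fun j (b : Bool) => j = i → sg b * w i = c)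
  have h2 : Pr (fun x : Fin n → Bool => ∑ i ∈ {i}, sg (x i) * w i = c) =
     Pr (fun x : Fin n → Bool => ∀ j, j = i → sg (x j) * w i = c) := by
    apply Pr_congr; intro x; simp
  rw [h2, h, Fintype.prod_eq_single i]
  · have hne : (sg true : ZMod p) * w i ≠ sg false * w i := by
      intro h
      have := mul_right_cancel₀ hi h
      simp [sg, signb] at this
      have h2 : (2 : ZMod p) = 0 := by
        have : (1 : ZMod p) + 1 = 0 := by
          nth_rewrite 1 [this]; ring
        rw [← this]; ring
      have h3 : ((2:ℕ) : ZMod p) = 0 := by exact_mod_cast h2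
      rw [ZMod.natCast_eq_zero_iff] at h3
      exact hp ((Nat.prime_dvd_prime_iff_eq (Fact.out) Nat.prime_two).1 h3)
    unfold Pr
    rw [Fintype.expect_eq_sum_div_card]
    simp only [forall_true_left, Fintype.sum_bool, Fintype.card_bool]
    by_cases h1 : (sg true : ZMod p) * w i = c
    · have : ¬ (sg false : ZMod p) * w i = c := fun h => hne (h1.trans h.symm)
      simp [h1, this]
    · simp only [h1, if_false]
      split_ifs <;> norm_num
  · intro j hj
    rw [← Pr_true (Ω := Bool)]
    exact Pr_congr fun b => by simp [hj]

lemma Pr_mulVec_le_half {n : ℕ} (hp : p ≠ 2) (lam : ZMod p) (w u : Fin n → ZMod p) (hw : w ≠ 0) :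
    Pr (fun ω : Fin n → Fin n → Bool => (shM lam ω).mulVec w = u) ≤ (1/2) ^ (n - 1) := by
  obtain ⟨i, hi⟩ := Function.ne_iff.1 hw
  have := Pr_mulVec_le lam {i} w u (1/2) (Pr_single_le hp w i hi)
  simpa using this
end

open Finset
noncomputable section
open scoped BigOperators

variable {p : ℕ} [Fact p.Prime]

lemma two_ne_zero_zmod (hp : p ≠ 2) : (2 : ZMod p) ≠ 0 := by
  intro h2
  have h3 : ((2:ℕ) : ZMod p) = 0 := by exact_mod_cast h2
  rw [ZMod.natCast_eq_zero_iff] at h3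
  exact hp ((Nat.prime_dvd_prime_iff_eq (Fact.out) Nat.prime_two).1 h3)

lemma parseval (hp : p ≠ 2) (S : Finset (ZMod p)) :
    ∑ a : ZMod p, ‖∑ t ∈ S, ch (2 * (t * a))‖ ^ 2 = p * S.card := by
  have h : ∀ a : ZMod p, ((‖∑ t ∈ S, ch (2 * (t * a))‖ ^ 2 : ℝ) : ℂ)
      = ∑ t ∈ S, ∑ s ∈ S, ch (a * (2 * (t - s))) := by
    intro a
    push_cast
    rw [← Complex.mul_conj', map_sum, sum_mul_sum]
    refine sum_congr rfl fun t _ => sum_congr rfl fun s _ => ?_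
    rw [← ch_neg, ← ch_add]; congr 1; ring
  have : ((∑ a : ZMod p, ‖∑ t ∈ S, ch (2 * (t * a))‖ ^ 2 : ℝ) : ℂ) = p * S.card := by
    rw [Complex.ofReal_sum, sum_congr rfl (fun a _ => h a), sum_comm]
    have h2 : ∀ t ∈ S, ∑ a : ZMod p, ∑ s ∈ S, ch (a * (2 * (t - s))) = p := by
      intro t ht
      rw [sum_comm]
      have h3 : ∀ s ∈ S, ∑ a : ZMod p, ch (a * (2 * (t - s))) = if t = s then (p:ℂ) else 0 := by
        intro s _
        rw [ch_sum_mul]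
        have := two_ne_zero_zmod hp
        simp [sub_eq_zero, this]
      rw [sum_congr rfl h3]
      simp [ht]
    rw [sum_congr rfl h2]
    simp [mul_comm]
  exact_mod_cast this

def Aset {d : ℕ} (t : Fin d → ZMod p) : Finset (ZMod p) :=
  univ.filter fun a => ∀ l, tau (t l * a) ≤ 1 / 20

lemma zero_mem_Aset {d : ℕ} (t : Fin d → ZMod p) : 0 ∈ Aset t := by
  simp [Aset, tau_zero]

lemma exists_tuple (hp : p ≠ 2) (S : Finset (ZMod p)) (hS : S.Nonempty) (d : ℕ)
    (hd : (p:ℝ) * (39/40)^d ≤ 1/5) :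
    ∃ t : Fin d → ZMod p, (∀ l, t l ∈ S) ∧ 2 * ((Aset t).card * S.card) ≤ 3 * p := by
  classical
  have hc0 : (0:ℝ) < S.card := by exact_mod_cast hS.card_pos
  have hcp : (S.card : ℝ) ≤ p := by
    have := card_le_univ S
    rw [ZMod.card] at this
    exact_mod_cast this
  set Sa : ZMod p → Finset (ZMod p) := fun a => S.filter fun s => tau (s * a) ≤ 1 / 20 with hSa
  set La : Finset (ZMod p) := univ.filter fun a => (39/40 : ℝ) * S.card ≤ (Sa a).card with hLa
  -- large set bound
  have hlarge : (La.card : ℝ) * (81/100) * S.card ≤ p := by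
    have h1 : ∀ a ∈ La, (81/100 : ℝ) * S.card ^ 2 ≤ ‖∑ t ∈ S, ch (2 * (t * a))‖ ^ 2 := by
      intro a ha
      have ha : (39/40 : ℝ) * S.card ≤ (Sa a).card := by simpa [hLa] using ha
      have h2 : ‖∑ t ∈ S, (1 - ch (2 * (t * a)))‖ ≤ (1/10) * S.card := by
        refine (norm_sum_le _ _).trans ?_
        have h3 : ∑ t ∈ S, ‖1 - ch (2 * (t * a))‖ ≤ ∑ t ∈ S, (1/20 + if tau (t * a) ≤ 1/20 then (0:ℝ) else 2) := by
          apply sum_le_sum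
          intro t _
          change tau (t * a) ≤ _
          split_ifs with h
          · linarith
          · linarith [tau_le_two (t * a)]
        refine h3.trans ?_
        rw [sum_add_distrib, sum_const, nsmul_eq_mul, ← sum_filter_add_sum_filter_not S (fun t => tau (t * a) ≤ 1/20)]
        have e1 : ∑ x ∈ S with tau (x * a) ≤ 1 / 20, (if tau (x * a) ≤ 1/20 then (0:ℝ) else 2) = 0 := by
          apply sum_eq_zero; intro x hx; simp only [mem_filter] at hx; simp only [hx.2, if_true]
        have e2 : ∑ x ∈ S with ¬ tau (x * a) ≤ 1 / 20, (if tau (x * a) ≤ 1/20 then (0:ℝ) else 2)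
            = (S.filter fun x => ¬ tau (x * a) ≤ 1 / 20).card * 2 := by
          rw [← nsmul_eq_mul, ← sum_const]
          apply sum_congr rfl; intro x hx; simp only [mem_filter] at hx; simp only [hx.2, if_false]
        rw [e1, e2]
        have e3 := card_filter_add_card_filter_not (s := S) (fun x => tau (x * a) ≤ 1 / 20)
        have e4 : ((Sa a).card : ℝ) + (S.filter fun x => ¬ tau (x * a) ≤ 1 / 20).card = S.card := by
          exact_mod_cast e3
        linarith
      have h4 : (S.card : ℂ) = ∑ t ∈ S, (1 - ch (2 * (t * a))) + ∑ t ∈ S, ch (2 * (t * a)) := by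
        rw [← sum_add_distrib]; simp
      have h5 : (S.card : ℝ) ≤ (1/10) * S.card + ‖∑ t ∈ S, ch (2 * (t * a))‖ := by
        calc (S.card : ℝ) = ‖(S.card : ℂ)‖ := by simp
          _ ≤ _ := by
            rw [h4]
            exact (norm_add_le _ _).trans (by gcongr)
      have h6 : (9/10 : ℝ) * S.card ≤ ‖∑ t ∈ S, ch (2 * (t * a))‖ := by linarith
      calc (81/100 : ℝ) * S.card ^ 2 = ((9/10 : ℝ) * S.card)^2 := by ring
        _ ≤ _ := by gcongr
    have h7 : (La.card : ℝ) * ((81/100 : ℝ) * S.card ^ 2) ≤ p * S.card := by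
      rw [← parseval hp S, ← nsmul_eq_mul, ← sum_const]
      refine (sum_le_sum h1).trans ?_
      exact sum_le_sum_of_subset_of_nonneg (subset_univ _) (fun _ _ _ => by positivity)
    have : ((La.card : ℝ) * (81/100) * S.card) * S.card ≤ p * S.card := by
      calc _ = (La.card : ℝ) * ((81/100 : ℝ) * S.card ^ 2) := by ring
        _ ≤ _ := h7
    exact le_of_mul_le_mul_right this hc0
  set PS := Fintype.piFinset (fun _ : Fin d => S) with hPS
  have hPScard : (PS.card : ℝ) = (S.card : ℝ)^d := by
    rw [hPS, Fintype.card_piFinset]; simp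
  have hdc : ∑ t ∈ PS, (Aset t).card = ∑ a : ZMod p, (Sa a).card ^ d := by
    have := sum_card_bipartiteAbove_eq_sum_card_bipartiteBelow (s := PS) (t := (univ : Finset (ZMod p)))
      (fun t a => ∀ l, tau (t l * a) ≤ 1 / 20)
    unfold bipartiteAbove bipartiteBelow at this
    unfold Aset
    rw [this]
    apply sum_congr rfl
    intro a _
    have : (PS.filter fun t => ∀ l, tau (t l * a) ≤ 1 / 20) = Fintype.piFinset (fun _ : Fin d => Sa a) := by
      ext t
      simp only [hPS, hSa, mem_filter, Fintype.mem_piFinset]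
      exact ⟨fun h l => ⟨h.1 l, h.2 l⟩, fun h => ⟨fun l => (h l).1, fun l => (h l).2⟩⟩
    rw [this, Fintype.card_piFinset]; simp
  have hsum : (∑ t ∈ PS, ((Aset t).card : ℝ)) ≤ ∑ t ∈ PS, ((3/2 : ℝ) * (p:ℝ) / (S.card:ℝ)) := by
    rw [sum_const, nsmul_eq_mul, hPScard]
    have e : (∑ t ∈ PS, ((Aset t).card : ℝ)) = ∑ a : ZMod p, ((Sa a).card : ℝ) ^ d := by
      exact_mod_cast hdc
    rw [e]
    have hb : ∀ a : ZMod p, ((Sa a).card : ℝ) ^ d ≤ (S.card:ℝ)^d * ((if a ∈ La then 1 else 0) + (39/40)^d) := by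
      intro a
      split_ifs with ha
      · have h1 : ((Sa a).card : ℝ) ≤ S.card := by exact_mod_cast card_filter_le _ _
        have h2 : ((Sa a).card : ℝ)^d ≤ (S.card:ℝ)^d := by gcongr
        have : (0:ℝ) ≤ (39/40)^d := by positivity
        nlinarith [pow_pos hc0 d]
      · have ha : ((Sa a).card : ℝ) ≤ (39/40 : ℝ) * S.card := by
          simp only [hLa, mem_filter, mem_univ, true_and, not_le] at ha
          exact ha.le
        rw [zero_add, mul_comm, ← mul_pow]
        gcongr
    refine (sum_le_sum fun a _ => hb a).trans ?_
    rw [← mul_sum]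
    gcongr
    rw [sum_add_distrib, sum_const, card_univ, ZMod.card, nsmul_eq_mul, sum_ite_mem]
    simp only [univ_inter, sum_const, nsmul_eq_mul, mul_one]
    rw [le_div_iff₀ hc0]
    nlinarith
  obtain ⟨t, ht, h⟩ := exists_le_of_sum_le (by
    exact ⟨fun _ => hS.choose, Fintype.mem_piFinset.2 fun _ => hS.choose_spec⟩ : PS.Nonempty) hsum
  refine ⟨t, by simpa [hPS] using ht, ?_⟩
  rw [le_div_iff₀ hc0] at h
  have : (2 * ((Aset t).card * S.card) : ℝ) ≤ 3 * p := by linarith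
  exact_mod_cast this

/-- multipliers for which the block is small -/
def Sset {ι : Type*} (B : Finset ι) (w : ι → ZMod p) (R : ℝ) : Finset (ZMod p) :=
  univ.filter fun t => ∑ i ∈ B, tau (t * w i) ^ 2 ≤ R

lemma zero_mem_Sset {ι : Type*} (B : Finset ι) (w : ι → ZMod p) (R : ℝ) (hR : 0 ≤ R) :
    0 ∈ Sset B w R := by simp [Sset, tau_zero, hR]

open Pointwise in
lemma Sset_double {ι : Type*} (B : Finset ι) (w : ι → ZMod p) (R : ℝ) (hR : 0 ≤ R) (T : ℕ)
    (h : min p (T + 1) ≤ (Sset B w R).card) : min p (2 * T + 1) ≤ (Sset B w (4 * R)).card := by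
  have hsub : Sset B w R + Sset B w R ⊆ Sset B w (4 * R) := by
    intro x hx
    obtain ⟨s, hs, t, ht, rfl⟩ := mem_add.1 hx
    simp only [Sset, mem_filter, mem_univ, true_and] at hs ht ⊢
    have : ∀ i ∈ B, tau ((s + t) * w i) ^ 2 ≤ 2 * tau (s * w i) ^ 2 + 2 * tau (t * w i) ^ 2 := by
      intro i _
      rw [add_mul]
      have h1 := tau_add (s * w i) (t * w i)
      have h2 := tau_nonneg (s * w i + t * w i)
      nlinarith [sq_nonneg (tau (s * w i) - tau (t * w i))]
    refine (sum_le_sum this).trans ?_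
    rw [sum_add_distrib, ← mul_sum, ← mul_sum]
    linarith
  have hne : (Sset B w R).Nonempty := ⟨0, zero_mem_Sset B w R hR⟩
  have h1 := ZMod.cauchy_davenport (Fact.out : p.Prime) hne hne
  have h2 := card_le_card hsub
  have := (Fact.out : p.Prime).two_le
  omega

lemma Sset_four {ι : Type*} (B : Finset ι) (w : ι → ZMod p) (R : ℝ) (hR : 0 ≤ R) (T : ℕ) (hT : 2 ≤ T)
    (h : T ≤ (Sset B w R).card) : min p (8 * T) ≤ (Sset B w (256 * R)).card := by
  have h0 : min p ((T-1) + 1) ≤ (Sset B w R).card := by omega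
  have h1 := Sset_double B w R hR _ h0
  have h2 := Sset_double B w _ (by positivity) _ h1
  have h3 := Sset_double B w _ (by positivity) _ h2
  have h4 := Sset_double B w _ (by positivity) _ h3
  have e : 4 * (4 * (4 * (4 * R))) = 256 * R := by ring
  rw [e] at h4
  omega

lemma card_exc (n E N : ℕ) (hn : 0 < n) (A : Fin n → Finset (ZMod p)) (h0 : ∀ i, 0 ∈ A i)
    (hA : ∀ i, (A i).card ≤ N) :
    (univ.filter fun w : Fin n → ZMod p => (univ.filter fun i => w i ∉ A i).card ≤ E).card
      ≤ (n * p) ^ E * N ^ n := by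
  classical
  have : Nonempty (Fin n) := ⟨⟨0, hn⟩⟩
  set D := (univ : Finset (Fin E → Fin n × ZMod p)) ×ˢ Fintype.piFinset A with hD
  let Φ : (Fin E → Fin n × ZMod p) × (Fin n → ZMod p) → (Fin n → ZMod p) := fun q i =>
    if h : ∃ k, (q.1 k).1 = i then (q.1 h.choose).2 else q.2 i
  have hsub : (univ.filter fun w : Fin n → ZMod p => (univ.filter fun i => w i ∉ A i).card ≤ E)
      ⊆ D.image Φ := by
    intro w hw
    simp only [mem_filter, mem_univ, true_and] at hw
    set X := univ.filter fun i => w i ∉ A i with hX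
    obtain ⟨g, hg⟩ : ∃ g : Fin E → Fin n, ∀ i ∈ X, ∃ k, g k = i := by
      have hcard : Fintype.card X ≤ Fintype.card (Fin E) := by simpa using hw
      obtain ⟨f⟩ := Function.Embedding.nonempty_of_card_le hcard
      refine ⟨fun k => if h : ∃ x : X, f x = k then (h.choose : Fin n) else Classical.arbitrary _, ?_⟩
      intro i hi
      refine ⟨f ⟨i, hi⟩, ?_⟩
      have hex : ∃ x : X, f x = f ⟨i, hi⟩ := ⟨_, rfl⟩
      beta_reduce
      rw [dif_pos hex]
      have := f.injective hex.choose_spec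
      rw [this]
    rw [mem_image]
    refine ⟨(fun k => (g k, w (g k)), fun i => if w i ∈ A i then w i else 0), ?_, ?_⟩
    · simp only [hD, mem_product, mem_univ, true_and, Fintype.mem_piFinset]
      intro i
      split_ifs with h
      · exact h
      · exact h0 i
    · funext i
      simp only [Φ]
      split_ifs with h h2
      · have := h.choose_spec
        rw [this]
      · rfl
      · exfalso
        exact h (hg i (by simp [hX, h2]))
  refine (card_le_card hsub).trans (card_image_le.trans ?_)
  rw [hD, card_product, card_univ, Fintype.card_piFinset]
  simp only [Fintype.card_fun, Fintype.card_prod, Fintype.card_fin, ZMod.card]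
  gcongr
  calc _ ≤ ∏ i : Fin n, N := prod_le_prod' (fun i _ => hA i)
    _ = _ := by simp

lemma card_exc_block {n d : ℕ} (B : Finset (Fin n)) (w : Fin n → ZMod p) (t : Fin d → ZMod p) (R : ℕ)
    (h : ∀ l, t l ∈ Sset B w R) :
    (B.filter fun i => w i ∉ Aset t).card ≤ d * (400 * R) := by
  classical
  have hsub : (B.filter fun i => w i ∉ Aset t) ⊆
      univ.biUnion fun l : Fin d => B.filter fun i => ¬ tau (t l * w i) ≤ 1/20 := by
    intro i hi
    simp only [mem_filter, Aset, mem_univ, true_and, not_forall] at hi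
    obtain ⟨hi, l, hl⟩ := hi
    simp only [mem_biUnion, mem_univ, true_and, mem_filter]
    exact ⟨l, hi, hl⟩
  refine (card_le_card hsub).trans (card_biUnion_le.trans ?_)
  calc _ ≤ ∑ l : Fin d, 400 * R := by
        apply sum_le_sum
        intro l _
        have h1 := h l
        simp only [Sset, mem_filter, mem_univ, true_and] at h1
        have h2 : ((B.filter fun i => ¬ tau (t l * w i) ≤ 1/20).card : ℝ) * (1/400) ≤ R := by
          refine le_trans ?_ h1
          rw [← nsmul_eq_mul, ← sum_const]
          refine le_trans (sum_le_sum (g := fun i => tau (t l * w i)^2) ?_) (sum_le_sum_of_subset_of_nonneg (filter_subset _ _) (fun _ _ _ => by positivity))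
          intro i hi
          simp only [mem_filter, not_le] at hi
          nlinarith [hi.2]
        have h3 : ((B.filter fun i => ¬ tau (t l * w i) ≤ 1/20).card : ℝ) ≤ 400 * R := by linarith
        exact_mod_cast h3
    _ = _ := by simp

/-- block indexed by `j` -/
def Blk {n r : ℕ} (Z : Finset (Fin n)) (blk : Fin n → Fin r) (j : Fin r) : Finset (Fin n) :=
  univ.filter fun i => i ∉ Z ∧ blk i = j

open Classical in
lemma count_W (hp : p ≠ 2) {n r : ℕ} (hn : 0 < n) (Z : Finset (Fin n)) (blk : Fin n → Fin r) (T d R : ℕ)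
    (hT : 2 ≤ T) (hd : (p:ℝ) * (39/40)^d ≤ 1/5) :
    (univ.filter fun w : Fin n → ZMod p => ∀ j, T ≤ (Sset (Blk Z blk j) w R).card).card
    ≤ (p ^ d) ^ r * ((n * p) ^ (Z.card + r * (d * (400 * (256 * R)))) * (3 * p / (2 * min p (8 * T))) ^ n) := by
  set N := 3 * p / (2 * min p (8 * T)) with hN
  set E := Z.card + r * (d * (400 * (256 * R))) with hE
  have hpp := (Fact.out : p.Prime).pos
  set TT : Finset (Fin r → Fin d → ZMod p) := univ.filter fun tt => ∀ j, (Aset (tt j)).card ≤ N with hTT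
  have hsub : (univ.filter fun w : Fin n → ZMod p => ∀ j, T ≤ (Sset (Blk Z blk j) w R).card) ⊆
    TT.biUnion fun tt => univ.filter fun w : Fin n → ZMod p => (univ.filter fun i => w i ∉ Aset (tt (blk i))).card ≤ E := by
    intro w hw
    simp only [mem_filter, mem_univ, true_and] at hw
    have hex : ∀ j, ∃ t : Fin d → ZMod p, (∀ l, t l ∈ Sset (Blk Z blk j) w (256 * R)) ∧ (Aset t).card ≤ N := by
      intro j
      have h1 := Sset_four (Blk Z blk j) w R (by positivity) T hT (hw j)
      obtain ⟨t, ht, h2⟩ := exists_tuple hp (Sset (Blk Z blk j) w (256 * R))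
        ⟨0, zero_mem_Sset _ _ _ (by positivity)⟩ d hd
      refine ⟨t, ht, ?_⟩
      rw [hN, Nat.le_div_iff_mul_le (by positivity)]
      calc _ = 2 * ((Aset t).card * min p (8 * T)) := by ring
        _ ≤ 2 * ((Aset t).card * (Sset (Blk Z blk j) w (256 * R)).card) := by gcongr
        _ ≤ _ := h2
    choose tt htt hcard using hex
    simp only [mem_biUnion]
    refine ⟨tt, by simpa [hTT] using hcard, ?_⟩
    simp only [mem_filter, mem_univ, true_and]
    have hs2 : (univ.filter fun i => w i ∉ Aset (tt (blk i))) ⊆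
      Z ∪ univ.biUnion fun j => (Blk Z blk j).filter fun i => w i ∉ Aset (tt j) := by
      intro i hi
      simp only [mem_filter, mem_univ, true_and] at hi
      by_cases hz : i ∈ Z
      · exact mem_union_left _ hz
      · apply mem_union_right
        simp only [mem_biUnion, mem_univ, true_and, mem_filter, Blk]
        exact ⟨blk i, ⟨hz, rfl⟩, hi⟩
    refine (card_le_card hs2).trans ((card_union_le _ _).trans ?_)
    rw [hE]
    gcongr
    refine card_biUnion_le.trans ?_
    calc _ ≤ ∑ j : Fin r, d * (400 * (256 * R)) := by
          apply sum_le_sum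
          intro j _
          apply card_exc_block
          intro l
          have := htt j l
          push_cast; exact this
      _ = _ := by simp
  refine (card_le_card hsub).trans (card_biUnion_le.trans ?_)
  calc _ ≤ ∑ tt ∈ TT, ((n * p) ^ E * N ^ n) := by
        apply sum_le_sum
        intro tt htt
        simp only [hTT, mem_filter, mem_univ, true_and] at htt
        exact card_exc n E N hn (fun i => Aset (tt (blk i))) (fun i => zero_mem_Aset _) (fun i => htt _)
    _ ≤ _ := by
        rw [sum_const, smul_eq_mul]
        gcongr
        refine (card_le_univ _).trans (le_of_eq ?_)
        simp [ZMod.card]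
end

open Finset
noncomputable section
open scoped BigOperators

variable {p : ℕ} [Fact p.Prime]

lemma two_pow_le_exp (l : ℕ) : (2:ℝ)^l ≤ Real.exp l := by
  have h : (2:ℝ) ≤ Real.exp 1 := by have := Real.add_one_le_exp (1:ℝ); linarith
  calc (2:ℝ)^l ≤ (Real.exp 1)^l := by gcongr
    _ = _ := by rw [← Real.exp_nat_mul]; simp

lemma sum_tau_le {ι : Type*} (s : Finset ι) (w : ι → ZMod p) (l : ℕ)
    (h : (1/2:ℝ)^(4*l) ≤ ∏ i ∈ s, cn (w i)) : ∑ i ∈ s, tau (w i) ^ 2 ≤ ((32 * l : ℕ) : ℝ) := by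
  have h1 := h.trans (prod_cn_le s w)
  by_contra hc
  push Not at hc
  have h2 : Real.exp (-((∑ i ∈ s, tau (w i) ^ 2) / 8)) < Real.exp (-((4 * l : ℕ) : ℝ)) := by
    apply Real.exp_lt_exp.2
    push_cast at hc ⊢
    linarith
  have h3 : Real.exp (-((4 * l : ℕ) : ℝ)) ≤ (1/2:ℝ)^(4*l) := by
    rw [Real.exp_neg, one_div, inv_pow]
    gcongr
    exact two_pow_le_exp _
  linarith

lemma block_rho {n : ℕ} (B : Finset (Fin n)) (w : Fin n → ZMod p) (l : ℕ) (hpl : p ≤ 2 ^ l) (T : ℕ)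
    (hT : 1 ≤ T) (h : (Sset B w ((32 * l : ℕ) : ℝ)).card = T) (c : ZMod p) :
    Pr (fun x : Fin n → Bool => ∑ i ∈ B, sg (x i) * w i = c) ≤ 2 * T / p := by
  classical
  have hp0 : (0:ℝ) < p := by exact_mod_cast (Fact.out : p.Prime).pos
  refine (Pr_lin_le B w c).trans ?_
  gcongr
  have hb : ∀ t : ZMod p, ∏ i ∈ B, cn (t * w i) ≤ (if t ∈ Sset B w ((32 * l : ℕ) : ℝ) then 1 else 0) + 1 / p := by
    intro t
    split_ifs with ht
    · have : ∏ i ∈ B, cn (t * w i) ≤ 1 := prod_le_one (fun _ _ => cn_nonneg _) (fun _ _ => cn_le_one _)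
      have : (0:ℝ) ≤ 1 / p := by positivity
      linarith
    · simp only [Sset, mem_filter, mem_univ, true_and, not_le] at ht
      refine (prod_cn_le B (fun i => t * w i)).trans ?_
      rw [zero_add, Real.exp_neg, one_div]
      gcongr
      calc (p:ℝ) ≤ 2 ^ l := by exact_mod_cast hpl
        _ ≤ Real.exp l := two_pow_le_exp l
        _ ≤ _ := by
          apply Real.exp_le_exp.2
          push_cast at ht
          have : (0:ℝ) ≤ l := by positivity
          linarith
  refine (sum_le_sum fun t _ => hb t).trans ?_
  rw [sum_add_distrib, sum_ite_mem]
  simp only [univ_inter, sum_const, nsmul_eq_mul, mul_one, card_univ, ZMod.card]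
  rw [h, mul_one_div_cancel hp0.ne']
  have : (1:ℝ) ≤ T := by exact_mod_cast hT
  linarith

/-- last `4 l` coordinates -/
def Zs (n l : ℕ) : Finset (Fin n) := univ.filter fun i => n - 4 * l ≤ i.val

lemma Zs_card (n l : ℕ) (h : 4 * l ≤ n) : (Zs n l).card = 4 * l := by
  have h1 : (Zs n l).card + (univ.filter fun i : Fin n => i.val < n - 4 * l).card = n := by
    have := card_filter_add_card_filter_not (s := (univ : Finset (Fin n))) (fun i => n - 4 * l ≤ i.val)
    simp only [not_le, card_univ, Fintype.card_fin] at this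
    exact this
  have h2 : (univ.filter fun i : Fin n => i.val < n - 4 * l).card = n - 4 * l := by
    rw [Fin.card_filter_val_lt]; omega
  omega

def BadV {n : ℕ} (l : ℕ) (w : Fin n → ZMod p) : Prop :=
  w ≠ 0 ∧ (1/2:ℝ)^(4*l) ≤ ∏ i ∈ univ \ Zs n l, cn (w i)

lemma Blk_card {n r : ℕ} (hr : 0 < r) (Z : Finset (Fin n)) (j : Fin r) :
    (Blk Z (fun i : Fin n => (⟨i.val % r, Nat.mod_lt _ hr⟩ : Fin r)) j).card ≤ n / r + 1 := by
  rw [← card_range (n / r + 1)]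
  apply card_le_card_of_injOn (fun i => i.val / r)
  · intro i _
    simp only [coe_range, Set.mem_Iio]
    exact Nat.lt_succ_of_le (Nat.div_le_div_right i.2.le)
  · intro a ha b hb hab
    simp only [Blk, coe_filter, mem_univ, true_and, Set.mem_setOf_eq] at ha hb
    have h1 : a.val % r = b.val % r := by
      have := congrArg Fin.val (ha.2.trans hb.2.symm); simpa using this
    have h2 : a.val / r = b.val / r := hab
    apply Fin.ext
    rw [← Nat.div_add_mod a.val r, ← Nat.div_add_mod b.val r, h1, h2]

lemma half40 : (39/40:ℝ)^40 ≤ 1/2 := by norm_num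

lemma hd_ok (l : ℕ) (hl : 1 ≤ l) (hpl : p ≤ 2 ^ l) : (p:ℝ) * (39/40)^(160 * l) ≤ 1/5 := by
  have h1 : (39/40:ℝ)^(160 * l) ≤ (1/2)^(4 * l) := by
    calc (39/40:ℝ)^(160 * l) = ((39/40:ℝ)^40)^(4 * l) := by rw [← pow_mul]; congr 1; ring
      _ ≤ _ := by gcongr; exact half40
  have h2 : (p:ℝ) ≤ 2 ^ l := by exact_mod_cast hpl
  calc _ ≤ (2:ℝ)^l * (1/2)^(4*l) := by gcongr
    _ = (1/8)^l := by
      rw [pow_mul, ← mul_pow]; norm_num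
    _ ≤ (1/8)^1 := pow_le_pow_of_le_one (by norm_num) (by norm_num) hl
    _ ≤ _ := by norm_num

theorem thmA_aux (hp : p ≠ 2) {n l : ℕ} (hl : 1 ≤ l) (hpl : p ≤ 2 ^ l) (hn : 0 < n)
    (hrn : n / (8 * l) + 1 ≤ n) (lam : ZMod p) (u : Fin n → ZMod p) :
    Pr (fun ω : Fin n → Fin n → Bool => ∃ w, BadV l w ∧ (shM lam ω).mulVec w = u) ≤
      (p + 1) * (((p ^ (160 * l)) ^ (8 * l) * ((n * p) ^ ((Zs n l).card + (8 * l) * ((160 * l) * (400 * (256 * (32 * l)))))) : ℕ)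
       * (p:ℝ) ^ (n / (8 * l) + 1) * (1/2:ℝ)^(n-1)) := by
  classical
  have hpp : 0 < p := (Fact.out : p.Prime).pos
  have hp0 : (0:ℝ) < p := by exact_mod_cast hpp
  have hp1 : (1:ℝ) ≤ p := by exact_mod_cast hpp
  set C0 : ℕ := (p ^ (160 * l)) ^ (8 * l) * ((n * p) ^ ((Zs n l).card + (8 * l) * ((160 * l) * (400 * (256 * (32 * l)))))) with hC0
  set m := n / (8 * l) + 1 with hm
  have hr : 0 < 8 * l := by omega
  set Z := Zs n l with hZ
  set blk : Fin n → Fin (8 * l) := fun i => ⟨i.val % (8 * l), Nat.mod_lt _ hr⟩ with hblk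
  set R : ℕ := 32 * l with hR
  have : Nonempty (Fin (8 * l)) := ⟨⟨0, hr⟩⟩
  have hmin : ∀ w : Fin n → ZMod p, ∃ j0, ∀ j, (Sset (Blk Z blk j0) w R).card ≤ (Sset (Blk Z blk j) w R).card := by
    intro w
    obtain ⟨j, _, hj⟩ := exists_min_image univ (fun j => (Sset (Blk Z blk j) w R).card) univ_nonempty
    exact ⟨j, fun j' => hj j' (mem_univ _)⟩
  choose js hjs using hmin
  set g : (Fin n → ZMod p) → ℕ := fun w => (Sset (Blk Z blk (js w)) w R).card with hg
  set Bad : Finset (Fin n → ZMod p) := univ.filter fun w => BadV l w with hBad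
  have h1 : Pr (fun ω : Fin n → Fin n → Bool => ∃ w, BadV l w ∧ (shM lam ω).mulVec w = u) ≤
      ∑ w ∈ Bad, Pr (fun ω : Fin n → Fin n → Bool => (shM lam ω).mulVec w = u) := by
    refine le_trans (Pr_mono ?_) (Pr_exists_le Bad _)
    rintro ω ⟨w, hw, h⟩
    exact ⟨w, by simpa [hBad] using hw, h⟩
  refine h1.trans ?_
  have hmaps : ∀ w ∈ Bad, g w ∈ range (p + 1) := by
    intro w _
    rw [mem_range]
    have := card_le_univ (Sset (Blk Z blk (js w)) w R)
    rw [ZMod.card] at this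
    exact Nat.lt_succ_of_le this
  rw [← sum_fiberwise_of_maps_to hmaps]
  have h2 : ∀ T ∈ range (p + 1), ∑ w ∈ Bad with g w = T, Pr (fun ω : Fin n → Fin n → Bool => (shM lam ω).mulVec w = u)
     ≤ C0 * (p:ℝ) ^ m * (1/2:ℝ)^(n-1) := by
    intro T _
    by_cases hT : 2 ≤ T
    swap
    · have he : (Bad.filter fun w => g w = T) = ∅ := by
        apply filter_eq_empty_iff.2
        intro w hw hgw
        apply hT
        rw [← hgw]
        simp only [hBad, mem_filter, mem_univ, true_and] at hw
        have hs := sum_tau_le _ w l hw.2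
        have h01 : ({0, 1} : Finset (ZMod p)) ⊆ Sset (Blk Z blk (js w)) w R := by
          intro x hx
          simp only [mem_insert, mem_singleton] at hx
          rcases hx with rfl | rfl
          · exact zero_mem_Sset _ _ _ (by positivity)
          · simp only [Sset, mem_filter, mem_univ, true_and, one_mul]
            refine le_trans (sum_le_sum_of_subset_of_nonneg ?_ (fun _ _ _ => by positivity)) hs
            intro i hi
            simp only [Blk, mem_filter, mem_univ, true_and] at hi
            simp only [mem_sdiff, mem_univ, true_and]
            exact hi.1
        have h3 := card_le_card h01
        rwa [card_pair zero_ne_one] at h3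
      rw [he, sum_empty]; positivity
    set N := 3 * p / (2 * min p (8 * T)) with hN
    have hcard : ((Bad.filter fun w => g w = T).card : ℝ) ≤ C0 * (N:ℝ) ^ n := by
      have h3 := count_W hp hn Z blk T (160 * l) R hT (hd_ok l hl hpl)
      have h4 : (Bad.filter fun w => g w = T).card ≤ (univ.filter fun w : Fin n → ZMod p => ∀ j, T ≤ (Sset (Blk Z blk j) w R).card).card := by
        apply card_le_card
        intro w hw
        simp only [mem_filter] at hw
        simp only [mem_filter, mem_univ, true_and]
        intro j
        rw [← hw.2]
        exact hjs w j
      have h5 : (Bad.filter fun w => g w = T).card ≤ C0 * N ^ n := by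
        refine (h4.trans h3).trans (le_of_eq ?_)
        rw [hC0]; ring
      exact_mod_cast h5
    by_cases hsat : p ≤ 8 * T
    · -- saturated
      have hN1 : N = 1 := by
        rw [hN, min_eq_left hsat]
        rw [Nat.div_eq_iff (by positivity)]; omega
      rw [hN1] at hcard
      simp only [Nat.cast_one, one_pow, mul_one] at hcard
      calc _ ≤ ∑ w ∈ Bad with g w = T, (1/2:ℝ)^(n-1) := by
            apply sum_le_sum
            intro w hw
            simp only [hBad, mem_filter, mem_univ, true_and] at hw
            exact Pr_mulVec_le_half hp lam w u hw.1.1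
        _ ≤ C0 * (1/2:ℝ)^(n-1) := by
            rw [sum_const, nsmul_eq_mul]
            gcongr
        _ ≤ _ := by
            have : (1:ℝ) ≤ (p:ℝ)^m := one_le_pow₀ hp1
            have h6 : (0:ℝ) ≤ C0 * (1/2:ℝ)^(n-1) := by positivity
            nlinarith
    · push Not at hsat
      have hT0 : (0:ℝ) < T := by exact_mod_cast (by omega : 0 < T)
      set x : ℝ := 2 * T / p with hx
      have hx0 : 0 < x := by positivity
      have hx1 : x ≤ 1 := by
        rw [hx, div_le_one hp0]; exact_mod_cast (by omega : 2 * T ≤ p)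
      have hNx : N * x ≤ 3/8 := by
        have h7 : N * (2 * min p (8 * T)) ≤ 3 * p := Nat.div_mul_le_self _ _
        rw [min_eq_right hsat.le] at h7
        have h8 : (N:ℝ) * (2 * (8 * T)) ≤ 3 * p := by exact_mod_cast h7
        rw [hx, mul_div_assoc', div_le_iff₀ hp0]
        linarith
      calc _ ≤ ∑ w ∈ Bad with g w = T, x^(n-m) := by
            apply sum_le_sum
            intro w hw
            simp only [mem_filter] at hw
            refine (Pr_mulVec_le lam (Blk Z blk (js w)) w u x ?_).trans ?_
            · intro c
              exact block_rho _ w l hpl T (by omega) hw.2 c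
            · apply pow_le_pow_of_le_one hx0.le hx1
              have := Blk_card hr Z (js w)
              have : (Blk Z blk (js w)).card ≤ m := this
              omega
        _ ≤ C0 * (N:ℝ)^n * x^(n-m) := by
            rw [sum_const, nsmul_eq_mul]
            gcongr
        _ ≤ C0 * (N:ℝ)^n * (x^n * (p:ℝ)^m) := by
            gcongr
            have h9 : x^n = x^(n-m) * x^m := by rw [← pow_add]; congr 1; omega
            rw [h9, mul_assoc, ← mul_pow]
            have h10 : 1 ≤ x * p := by
              rw [hx, div_mul_cancel₀ _ hp0.ne']; exact_mod_cast (by omega : 1 ≤ 2 * T)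
            exact le_mul_of_one_le_right (by positivity) (one_le_pow₀ h10)
        _ = C0 * (p:ℝ)^m * (N * x)^n := by rw [mul_pow]; ring
        _ ≤ C0 * (p:ℝ)^m * (1/2)^n := by
            have : (N:ℝ) * x ≤ 1/2 := by linarith
            gcongr
        _ ≤ _ := by
            gcongr ?_ * ?_
            exact pow_le_pow_of_le_one (by norm_num) (by norm_num) (Nat.sub_le _ _)
  refine (sum_le_sum h2).trans ?_
  rw [sum_const, card_range, nsmul_eq_mul]
  push_cast
  exact le_rfl

theorem thmA (hp : p ≠ 2) {n l : ℕ} (hl : 1 ≤ l) (hpl : p ≤ 2 ^ l) (hnl : n ≤ 2 ^ l)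
    (hn : 2 ^ 40 * l ^ 4 ≤ n) (lam : ZMod p) (u : Fin n → ZMod p) :
    Pr (fun ω : Fin n → Fin n → Bool => ∃ w, BadV l w ∧ (shM lam ω).mulVec w = u) ≤ (1/2:ℝ)^(n/2) := by
  have hl2 : l ≤ l ^ 4 := Nat.le_self_pow (by norm_num) l
  have hl3 : l ^ 2 ≤ l ^ 4 := Nat.pow_le_pow_right (by omega) (by norm_num)
  have hpp : 0 < p := (Fact.out : p.Prime).pos
  have hdiv : n / (8 * l) * (8 * l) ≤ n := Nat.div_mul_le_self _ _
  have hdiv2 : n / (8 * l) * l ≤ n / 8 := by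
    rw [Nat.le_div_iff_mul_le (by norm_num)]
    calc _ = n / (8 * l) * (8 * l) := by ring
      _ ≤ n := hdiv
  have hdiv3 : n / (8 * l) ≤ n / 8 := le_trans (Nat.le_mul_of_pos_right _ (by omega)) hdiv2
  refine (thmA_aux hp hl hpl (by omega) (by omega) lam u).trans ?_
  rw [Zs_card n l (by omega)]
  set E := 4 * l + (8 * l) * ((160 * l) * (400 * (256 * (32 * l)))) with hE
  have hpR : (p:ℝ) ≤ 2 ^ l := by exact_mod_cast hpl
  have hnR : (n:ℝ) ≤ 2 ^ l := by exact_mod_cast hnl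
  have hp1 : (p:ℝ) + 1 ≤ 2 ^ (l + 1) := by
    have : p + 1 ≤ 2 ^ (l + 1) := by rw [pow_succ]; omega
    exact_mod_cast this
  push_cast
  calc _ ≤ (2:ℝ)^(l+1) * ((((2:ℝ)^l) ^ (160 * l)) ^ (8 * l) * ((2^l * 2^l)^E) * (2^l)^(n / (8 * l) + 1) * (1/2)^(n-1)) := by
        gcongr
    _ = 2 ^ (l + 1 + l * (160 * l) * (8 * l) + (l + l) * E + l * (n / (8 * l) + 1)) * (1/2)^(n-1) := by
        simp only [← pow_mul, ← pow_add]
        rw [← mul_assoc]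
        congr 1
        simp only [← pow_add]
        congr 1
        ring
    _ ≤ 2 ^ (n - 1 - n/2) * (1/2)^(n-1) := by
        gcongr
        · norm_num
        · have e1 : l * (160 * l) * (8 * l) + (l + l) * E = 1280 * l ^ 3 + 8 * l ^ 2 + 8388608000 * l ^ 4 := by
            rw [hE]; ring
          have hl4 : l ^ 3 ≤ l ^ 4 := Nat.pow_le_pow_right (by omega) (by norm_num)
          have e2 : l * (n / (8 * l) + 1) = n / (8 * l) * l + l := by ring
          omega
    _ = _ := by
        have : n - 1 = (n - 1 - n/2) + n/2 := by omega
        nth_rewrite 2 [this]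
        rw [pow_add, ← mul_assoc, ← mul_pow]
        norm_num
end

open Finset
noncomputable section
open scoped BigOperators

variable {p : ℕ} [Fact p.Prime]

lemma norm_expect_le' {α : Type*} [Fintype α] (f : α → ℂ) : ‖𝔼 a, f a‖ ≤ 𝔼 a, ‖f a‖ := by
  rw [Fintype.expect_eq_sum_div_card, Fintype.expect_eq_sum_div_card, norm_div]
  simp only [RCLike.norm_natCast]
  gcongr
  exact norm_sum_le _ _

lemma cs_bound {α β : Type*} [Fintype α] [Fintype β] [Nonempty α] (F : α → β → ℂ) :
    ‖𝔼 a, 𝔼 b, F a b‖ ^ 2 ≤ 𝔼 b, 𝔼 b', ‖𝔼 a, F a b * (starRingEnd ℂ) (F a b')‖ := by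
  have h1 : ‖𝔼 a, 𝔼 b, F a b‖ ^ 2 ≤ 𝔼 a, ‖𝔼 b, F a b‖ ^ 2 := by
    have h0 : ‖𝔼 a, 𝔼 b, F a b‖ ≤ 𝔼 a, ‖𝔼 b, F a b‖ := norm_expect_le' (fun a => 𝔼 b, F a b)
    refine (pow_le_pow_left₀ (norm_nonneg _) h0 2).trans ?_
    rw [Fintype.expect_eq_sum_div_card, Fintype.expect_eq_sum_div_card]
    have hc : (0:ℝ) < Fintype.card α := by exact_mod_cast Fintype.card_pos
    rw [div_pow, div_le_div_iff₀ (by positivity) hc]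
    have := sum_mul_sq_le_sq_mul_sq univ (fun _ : α => (1:ℝ)) (fun a => ‖𝔼 b, F a b‖)
    simp only [one_mul, one_pow, sum_const, card_univ, nsmul_eq_mul, mul_one] at this
    calc _ ≤ (Fintype.card α * ∑ i, ‖𝔼 b, F i b‖ ^ 2) * (Fintype.card α : ℝ) := by gcongr
      _ = _ := by ring
  refine h1.trans ?_
  have h2 : ((𝔼 a, ‖𝔼 b, F a b‖ ^ 2 : ℝ) : ℂ) = 𝔼 b, 𝔼 b', 𝔼 a, F a b * (starRingEnd ℂ) (F a b') := by
    have : ∀ a, ((‖𝔼 b, F a b‖ ^ 2 : ℝ) : ℂ) = 𝔼 b, 𝔼 b', F a b * (starRingEnd ℂ) (F a b') := by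
      intro a
      push_cast
      rw [← Complex.mul_conj', map_expect, expect_mul_expect]
    have e : ((𝔼 a, ‖𝔼 b, F a b‖ ^ 2 : ℝ) : ℂ) = 𝔼 a, ((‖𝔼 b, F a b‖ ^ 2 : ℝ) : ℂ) := by
      exact map_expect Complex.ofRealHom _ _
    rw [e]
    simp_rw [this]
    rw [expect_comm]
    apply expect_congr rfl
    intro b _
    rw [expect_comm]
  have h3 : (𝔼 a, ‖𝔼 b, F a b‖ ^ 2 : ℝ) = ‖((𝔼 a, ‖𝔼 b, F a b‖ ^ 2 : ℝ) : ℂ)‖ := by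
    rw [Complex.norm_real, Real.norm_of_nonneg]
    exact expect_nonneg (fun _ _ => by positivity)
  rw [h3, h2]
  refine (norm_expect_le' _).trans (expect_le_expect fun b _ => ?_)
  exact norm_expect_le' _

def mixC {n : ℕ} (J : Finset (Fin n)) (x y : Fin n → Bool) : Fin n → Bool :=
  fun i => if i ∈ J then y i else x i

lemma mixC_equiv_aux {n : ℕ} (J : Finset (Fin n)) (x y : Fin n → Bool) : 
   mixC J (mixC J x y) (mixC J y x) = x := by
  funext i; unfold mixC; split_ifs <;> rfl

def mixCEquiv {n : ℕ} (J : Finset (Fin n)) :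
    ((Fin n → Bool) × (Fin n → Bool)) ≃ ((Fin n → Bool) × (Fin n → Bool)) where
  toFun q := (mixC J q.1 q.2, mixC J q.2 q.1)
  invFun q := (mixC J q.1 q.2, mixC J q.2 q.1)
  left_inv q := by simp [mixC_equiv_aux]
  right_inv q := by simp [mixC_equiv_aux]

lemma expect_mixC {n : ℕ} (J : Finset (Fin n)) (f : (Fin n → Bool) → ℂ) :
    𝔼 x, f x = 𝔼 x, 𝔼 y, f (mixC J x y) := by
  have h1 : 𝔼 ω, f ω = 𝔼 q : (Fin n → Bool) × (Fin n → Bool), f q.1 := by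
    rw [← univ_product_univ, expect_product]
    apply expect_congr rfl
    intro ω _
    simp
  have h2 : 𝔼 q : (Fin n → Bool) × (Fin n → Bool), f q.1 =
    𝔼 q : (Fin n → Bool) × (Fin n → Bool), f (mixC J q.1 q.2) := by
    symm
    exact Fintype.expect_equiv (mixCEquiv J) _ _ (fun q => rfl)
  rw [h1, h2, ← univ_product_univ, expect_product]

/-- sign vector -/
def sv {n : ℕ} (x : Fin n → Bool) : Fin n → ZMod p := fun i => sg (x i)

def svJ {n : ℕ} (J : Finset (Fin n)) (x : Fin n → Bool) : Fin n → ZMod p := fun i => if i ∈ J then sg (x i) else 0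

def Zset (p : ℕ) [Fact p.Prime] (n l : ℕ) : Finset (Fin n → ZMod p) :=
  Fintype.piFinset fun i => if i ∈ Zs n l then {0, 2, -2} else {0}

lemma Zset_card (n l : ℕ) (h : 4 * l ≤ n) : (Zset p n l).card ≤ 2 ^ (8 * l) := by
  unfold Zset
  rw [Fintype.card_piFinset]
  calc _ ≤ ∏ i : Fin n, if i ∈ Zs n l then 4 else 1 := by
        apply prod_le_prod'
        intro i _
        split_ifs
        · exact (card_le_three).trans (by norm_num)
        · simp
    _ = 4 ^ (4 * l) := by
        rw [prod_ite]; simp [Zs_card n l h]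
    _ = _ := by
        rw [show 4 = 2 ^ 2 by rfl, ← pow_mul]; congr 1; ring

lemma zero_mem_Zset (n l : ℕ) : (0 : Fin n → ZMod p) ∈ Zset p n l := by
  unfold Zset
  rw [Fintype.mem_piFinset]
  intro i
  split_ifs <;> simp

lemma sub_mem_Zset {n l : ℕ} (y y' : Fin n → Bool) : svJ (Zs n l) y - svJ (Zs n l) y' ∈ Zset p n l := by
  unfold Zset
  rw [Fintype.mem_piFinset]
  intro i
  by_cases h : i ∈ Zs n l
  · simp only [h, if_true, svJ, Pi.sub_apply, sg, signb]
    cases y i <;> cases y' i <;> norm_num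
  · simp [h, svJ]

def Good {n : ℕ} (l : ℕ) (N : Matrix (Fin n) (Fin n) (ZMod p)) : Prop :=
  ∀ s : ZMod p, ∀ z ∈ Zset p n l, ∀ w, BadV l w → N.mulVec w ≠ s • z

lemma Pr_not_Good (hp : p ≠ 2) {n l : ℕ} (hl : 1 ≤ l) (hpl : p ≤ 2 ^ l) (hnl : n ≤ 2 ^ l)
    (hn : 2 ^ 40 * l ^ 4 ≤ n) (lam : ZMod p) :
    Pr (fun ω : Fin n → Fin n → Bool => ¬ Good l (shM lam ω)) ≤ 2 ^ (9 * l) * (1/2:ℝ)^(n/2) := by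
  have hl2 : l ≤ l ^ 4 := Nat.le_self_pow (by norm_num) l
  have h1 : Pr (fun ω : Fin n → Fin n → Bool => ¬ Good l (shM lam ω)) ≤
     Pr (fun ω : Fin n → Fin n → Bool => ∃ q ∈ (univ : Finset (ZMod p)) ×ˢ Zset p n l,
        ∃ w, BadV l w ∧ (shM lam ω).mulVec w = q.1 • q.2) := by
    apply Pr_mono
    intro ω h
    unfold Good at h
    push Not at h
    obtain ⟨s, z, hz, w, hw, e⟩ := h
    exact ⟨(s, z), by simp [hz], w, hw, e⟩
  refine h1.trans ((Pr_exists_le _ _).trans ?_)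
  refine (sum_le_sum fun q _ => thmA hp hl hpl hnl hn lam (q.1 • q.2)).trans ?_
  rw [sum_const, nsmul_eq_mul]
  gcongr
  rw [card_product, card_univ, ZMod.card]
  have := Nat.mul_le_mul hpl (Zset_card (p := p) n l (by omega))
  rw [← pow_add] at this
  have e : l + 8 * l = 9 * l := by ring
  rw [e] at this
  exact_mod_cast this

lemma Good_ker {n l : ℕ} {N : Matrix (Fin n) (Fin n) (ZMod p)} (hG : Good l N) (v : Fin n → ZMod p)
    (hv : v ≠ 0) (hN : N.mulVec v = 0) (hpl : p ≤ 2 ^ l) (c : ZMod p) :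
    Pr (fun x : Fin n → Bool => ∑ i, sg (x i) * v i = c) ≤ 2 / p := by
  have hp0 : (0:ℝ) < p := by exact_mod_cast (Fact.out : p.Prime).pos
  refine (Pr_lin_le univ v c).trans ?_
  gcongr
  have hpR : (p:ℝ) ≤ 2 ^ l := by exact_mod_cast hpl
  have h1 : ∀ t : ZMod p, t ≠ 0 → ∏ i, cn (t * v i) ≤ 1 / p := by
    intro t ht
    have h2 : ¬ BadV l (t • v) := by
      intro hb
      apply hG 0 0 (zero_mem_Zset _ _) _ hb
      rw [Matrix.mulVec_smul, hN]; simp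
    unfold BadV at h2
    push Not at h2
    have h3 := h2 (smul_ne_zero ht hv)
    have h4 : ∏ i, cn (t * v i) ≤ ∏ i ∈ univ \ Zs n l, cn ((t • v) i) := by
      simp only [Pi.smul_apply, smul_eq_mul]
      rw [← prod_sdiff (subset_univ (Zs n l))]
      exact mul_le_of_le_one_right (prod_nonneg fun i _ => cn_nonneg _)
        (prod_le_one (fun i _ => cn_nonneg _) (fun i _ => cn_le_one _))
    refine h4.trans (h3.le.trans ?_)
    calc (1/2:ℝ)^(4*l) ≤ (1/2)^l := pow_le_pow_of_le_one (by norm_num) (by norm_num) (by omega)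
      _ = 1 / 2 ^ l := by rw [div_pow, one_pow]
      _ ≤ 1 / p := by gcongr
  rw [← add_sum_erase _ _ (mem_univ (0 : ZMod p))]
  have h5 : ∏ i, cn (0 * v i) ≤ 1 := prod_le_one (fun i _ => cn_nonneg _) (fun i _ => cn_le_one _)
  have h6 : ∑ x ∈ univ.erase (0 : ZMod p), ∏ i, cn (x * v i) ≤ 1 := by
    refine (sum_le_sum fun t ht => h1 t (ne_of_mem_erase ht)).trans ?_
    rw [sum_const, nsmul_eq_mul]
    calc _ ≤ (p:ℝ) * (1 / p) := by
          gcongr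
          refine card_le_univ _ |>.trans ?_
          rw [ZMod.card]
      _ = 1 := by field_simp
  linarith

lemma Pr_svJ_eq (hp : p ≠ 2) {n l : ℕ} (h : 4 * l ≤ n) (y : Fin n → Bool) :
    Pr (fun y' : Fin n → Bool => svJ (p := p) (Zs n l) y = svJ (Zs n l) y') ≤ (1/2:ℝ)^(4*l) := by
  have h1 : Pr (fun y' : Fin n → Bool => svJ (p := p) (Zs n l) y = svJ (Zs n l) y') ≤
      Pr (fun y' : Fin n → Bool => ∀ i, (fun i b => i ∈ Zs n l → b = y i) i (y' i)) := by
    apply Pr_mono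
    intro y' h i hi
    have := congrFun h i
    simp only [svJ, hi, if_true, sg, signb] at this
    have h2 := two_ne_zero_zmod hp
    cases h3 : y i <;> cases h4 : y' i <;> simp [h3, h4] at this ⊢
    · exact h2 (by linear_combination -this)
    · exact h2 (by linear_combination this)
  refine h1.trans ?_
  rw [Pr_pi_all (fun (i : Fin n) (b : Bool) => i ∈ Zs n l → b = y i)]
  calc _ ≤ ∏ i : Fin n, (if i ∈ Zs n l then (1/2:ℝ) else 1) := by
        apply prod_le_prod (fun i _ => Pr_nonneg _)
        intro i _
        split_ifs with hi
        · simp only [hi, forall_const]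
          unfold Pr
          rw [Fintype.expect_eq_sum_div_card]
          cases y i <;> simp
        · exact Pr_le_one _
    _ = _ := by rw [prod_ite]; simp [Zs_card n l h]

lemma quad_bound (hp : p ≠ 2) {n l : ℕ} (h : 4 * l ≤ n) {N : Matrix (Fin n) (Fin n) (ZMod p)} (hG : Good l N)
    (hs : N.transpose = N) (hd : N.det ≠ 0) (t : ZMod p) (ht : t ≠ 0) :
    ‖𝔼 x : Fin n → Bool, ch (t * (sv x ⬝ᵥ N⁻¹.mulVec (sv x)))‖ ^ 2 ≤ 2 * (1/2:ℝ)^(4*l) := by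
  have hu : IsUnit N.det := Ne.isUnit hd
  set A := N⁻¹ with hA
  have hAs : A.transpose = A := by rw [hA, Matrix.transpose_nonsing_inv, hs]
  have hNA : N * A = 1 := Matrix.mul_nonsing_inv N hu
  set J := Zs n l with hJ
  rw [expect_mixC J]
  refine (cs_bound _).trans ?_
  have key : ∀ y y' : Fin n → Bool, ‖𝔼 x, ch (t * (sv (mixC J x y) ⬝ᵥ A.mulVec (sv (mixC J x y)))) *
      (starRingEnd ℂ) (ch (t * (sv (mixC J x y') ⬝ᵥ A.mulVec (sv (mixC J x y')))))‖ ≤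
      (if svJ (p := p) J y = svJ J y' then 1 else 0) + (1/2:ℝ)^(4*l) := by
    intro y y'
    split_ifs with e
    · have : ‖𝔼 x, ch (t * (sv (mixC J x y) ⬝ᵥ A.mulVec (sv (mixC J x y)))) *
      (starRingEnd ℂ) (ch (t * (sv (mixC J x y') ⬝ᵥ A.mulVec (sv (mixC J x y')))))‖ ≤ 1 := by
        refine (norm_expect_le' _).trans (expect_le univ_nonempty fun x _ => ?_)
        rw [norm_mul, RCLike.norm_conj, ch_norm, ch_norm, mul_one]
      have : (0:ℝ) ≤ (1/2:ℝ)^(4*l) := by positivity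
      linarith
    · rw [zero_add]
      set z := svJ (p := p) J y - svJ J y' with hz
      set w := (2 * t) • A.mulVec z with hw
      have hNw : N.mulVec w = (2 * t) • z := by
        rw [hw, Matrix.mulVec_smul, Matrix.mulVec_mulVec, hNA, Matrix.one_mulVec]
      have hw0 : w ≠ 0 := by
        intro h0
        rw [h0, Matrix.mulVec_zero] at hNw
        have := (smul_ne_zero (mul_ne_zero (two_ne_zero_zmod hp) ht) (sub_ne_zero.2 e))
        exact this hNw.symm
      have hb : ¬ BadV l w := fun hb => hG _ _ (sub_mem_Zset y y') w hb hNw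
      unfold BadV at hb
      push Not at hb
      refine le_trans (le_of_eq ?_) (hb hw0).le
      have hsp : ∀ x y, sv (mixC J x y) = svJ (p := p) (univ \ J) x + svJ J y := by
        intro x y
        funext i
        simp only [sv, mixC, svJ, Pi.add_apply, mem_sdiff, mem_univ, true_and]
        split_ifs <;> simp
      have hsym : ∀ a b : Fin n → ZMod p, a ⬝ᵥ A.mulVec b = b ⬝ᵥ A.mulVec a := by
        intro a b
        rw [Matrix.dotProduct_mulVec, ← Matrix.mulVec_transpose, hAs, dotProduct_comm]
      have e1 : ∀ x, ch (t * (sv (mixC J x y) ⬝ᵥ A.mulVec (sv (mixC J x y)))) *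
          (starRingEnd ℂ) (ch (t * (sv (mixC J x y') ⬝ᵥ A.mulVec (sv (mixC J x y'))))) =
          ch (t * (svJ J y ⬝ᵥ A.mulVec (svJ J y) - svJ J y' ⬝ᵥ A.mulVec (svJ J y'))) *
           ch (∑ i ∈ univ \ J, sg (x i) * w i) := by
        intro x
        rw [← ch_neg, ← ch_add, ← ch_add]
        congr 1
        have e2 : ∑ i ∈ univ \ J, sg (x i) * w i = svJ (univ \ J) x ⬝ᵥ w := by
          rw [dotProduct]
          simp only [svJ, ite_mul, zero_mul]
          rw [sum_ite_mem, univ_inter]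
        rw [e2, hsp, hsp, hw, dotProduct_smul, hz, Matrix.mulVec_sub, dotProduct_sub]
        simp only [Matrix.mulVec_add, dotProduct_add, add_dotProduct, smul_eq_mul]
        rw [hsym (svJ J y) (svJ (univ \ J) x), hsym (svJ J y') (svJ (univ \ J) x)]
        ring
      simp_rw [e1]
      rw [← mul_expect, norm_mul, ch_norm, one_mul, expect_ch, norm_prod]
      rfl
  refine (expect_le_expect fun y _ => expect_le_expect fun y' _ => key y y').trans ?_
  apply expect_le univ_nonempty
  intro y _
  rw [expect_add_distrib, expect_const univ_nonempty]
  have := Pr_svJ_eq hp h y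
  unfold Pr at this
  have e : (𝔼 y', (if svJ (p := p) J y = svJ J y' then (1:ℝ) else 0)) ≤ (1/2:ℝ)^(4*l) := by
    convert this
  linarith

lemma quad_close (hp : p ≠ 2) {n l : ℕ} (h : 4 * l ≤ n) (hpl : p ≤ 2 ^ l) {N : Matrix (Fin n) (Fin n) (ZMod p)} (hG : Good l N)
    (hs : N.transpose = N) (hd : N.det ≠ 0) (c : ZMod p) :
    |Pr (fun x : Fin n → Bool => sv x ⬝ᵥ N⁻¹.mulVec (sv x) = c) - 1 / p| ≤ 2 / p ^ 2 := by
  have hp0 : (0:ℝ) < p := by exact_mod_cast (Fact.out : p.Prime).pos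
  have hpR : (p:ℝ) ≤ 2 ^ l := by exact_mod_cast hpl
  apply Pr_close _ _ _ _ (by positivity)
  intro t ht
  apply le_of_sq_le_sq _ (by positivity)
  refine (quad_bound hp h hG hs hd t ht).trans ?_
  have e : (1/2:ℝ)^(4*l) = 1 / (2 ^ l) ^ 4 := by
    rw [div_pow, one_pow, ← pow_mul]; congr 2; ring
  rw [e]
  have : 1 / ((2:ℝ) ^ l) ^ 4 ≤ 1 / (p:ℝ)^4 := by gcongr
  calc _ ≤ 2 * (1 / (p:ℝ)^4) := by gcongr
    _ ≤ 4 * (1 / (p:ℝ)^4) := by gcongr; norm_num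
    _ = _ := by rw [div_pow]; ring
end

open Finset
noncomputable section
open scoped BigOperators

variable {p : ℕ} [Fact p.Prime]

def crk {n : ℕ} (N : Matrix (Fin n) (Fin n) (ZMod p)) : ℕ := Module.finrank (ZMod p) (LinearMap.ker N.mulVecLin)

lemma crk_le {n : ℕ} (N : Matrix (Fin n) (Fin n) (ZMod p)) : crk N ≤ n := by
  unfold crk
  exact (Submodule.finrank_le _).trans (by simp)

lemma crk_pos_iff {n : ℕ} (N : Matrix (Fin n) (Fin n) (ZMod p)) : 1 ≤ crk N ↔ N.det = 0 := by
  rw [← Matrix.exists_mulVec_eq_zero_iff]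
  unfold crk
  rw [Nat.one_le_iff_ne_zero, Ne, Submodule.finrank_eq_zero, ← Ne, Submodule.ne_bot_iff]
  constructor
  · rintro ⟨v, h1, h2⟩
    exact ⟨v, h2, by simpa using h1⟩
  · rintro ⟨v, h1, h2⟩
    exact ⟨v, by simpa using h2, h1⟩

/-- bordered structure -/
structure Bord {n : ℕ} (N' : Matrix (Fin (n+1)) (Fin (n+1)) (ZMod p)) (N : Matrix (Fin n) (Fin n) (ZMod p))
    (a : ZMod p) (y : Fin n → ZMod p) : Prop where
  h00 : N' 0 0 = a
  h0s : ∀ j, N' 0 j.succ = y j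
  hs0 : ∀ j, N' j.succ 0 = y j
  hss : ∀ i j, N' i.succ j.succ = N i j
  sym : N.transpose = N

variable {n : ℕ} {N' : Matrix (Fin (n+1)) (Fin (n+1)) (ZMod p)} {N : Matrix (Fin n) (Fin n) (ZMod p)}
    {a : ZMod p} {y : Fin n → ZMod p}

lemma Bord.mulVec_iff (B : Bord N' N a y) (v : Fin (n+1) → ZMod p) :
    N'.mulVec v = 0 ↔ a * v 0 + y ⬝ᵥ (Fin.tail v) = 0 ∧ v 0 • y + N.mulVec (Fin.tail v) = 0 := by
  have e0 : N'.mulVec v 0 = a * v 0 + y ⬝ᵥ (Fin.tail v) := by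
    simp only [Matrix.mulVec, dotProduct, Fin.sum_univ_succ, B.h00, B.h0s, Fin.tail]
  have e1 : ∀ i : Fin n, N'.mulVec v i.succ = (v 0 • y + N.mulVec (Fin.tail v)) i := by
    intro i
    simp only [Matrix.mulVec, dotProduct, Fin.sum_univ_succ, B.hs0, B.hss, Fin.tail, Pi.add_apply, Pi.smul_apply, smul_eq_mul]
    ring
  constructor
  · intro h
    refine ⟨by rw [← e0, h]; rfl, ?_⟩
    funext i
    rw [← e1, h]; rfl
  · rintro ⟨h0, h1⟩
    funext i
    refine Fin.cases ?_ (fun i => ?_) i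
    · rw [e0, h0]; rfl
    · rw [e1, h1]; rfl

def tailL (n : ℕ) : (Fin (n+1) → ZMod p) →ₗ[ZMod p] (Fin n → ZMod p) where
  toFun v := Fin.tail v
  map_add' _ _ := rfl
  map_smul' _ _ := rfl

lemma tail_inj {v w : Fin (n+1) → ZMod p} (h0 : v 0 = w 0) (h : Fin.tail v = Fin.tail w) : v = w := by
  funext i
  refine Fin.cases h0 (fun i => ?_) i
  exact congrFun h i

lemma Bord.crk_le_succ (B : Bord N' N a y) : crk N' ≤ crk N + 1 := by
  set K := LinearMap.ker N'.mulVecLin with hK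
  let f : K →ₗ[ZMod p] ZMod p := (LinearMap.proj 0).comp K.subtype
  have h1 := LinearMap.finrank_range_add_finrank_ker f
  have h2 : Module.finrank (ZMod p) (LinearMap.range f) ≤ 1 :=
    (Submodule.finrank_le _).trans (by simp)
  have h3 : Module.finrank (ZMod p) (LinearMap.ker f) ≤ crk N := by
    unfold crk
    let g : LinearMap.ker f →ₗ[ZMod p] LinearMap.ker N.mulVecLin :=
      LinearMap.codRestrict _ ((tailL n).comp (K.subtype.comp (LinearMap.ker f).subtype)) (by
        rintro ⟨⟨v, hv⟩, h0⟩
        have h0' : v 0 = 0 := h0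
        have hv' : N'.mulVec v = 0 := hv
        have := ((B.mulVec_iff v).1 hv').2
        rw [h0', zero_smul, zero_add] at this
        exact this)
    apply LinearMap.finrank_le_finrank_of_injective (f := g)
    rintro ⟨⟨v, hv⟩, h0⟩ ⟨⟨v', hv'⟩, h0'⟩ h
    have e0 : v 0 = 0 := h0
    have e0' : v' 0 = 0 := h0'
    have e1 : Fin.tail v = Fin.tail v' := congrArg Subtype.val h
    have := tail_inj (e0.trans e0'.symm) e1
    subst this
    rfl
  have : crk N' = Module.finrank (ZMod p) K := rfl
  omega

lemma Bord.crk_lt (B : Bord N' N a y) (u : Fin n → ZMod p) (hu : N.mulVec u = 0) (hy : y ⬝ᵥ u ≠ 0) :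
    crk N' < crk N := by
  set K := LinearMap.ker N'.mulVecLin with hK
  set L : Submodule (ZMod p) (Fin n → ZMod p) := LinearMap.ker N.mulVecLin with hL
  have hz : ∀ v, N'.mulVec v = 0 → v 0 = 0 := by
    intro v hv
    have h2 := ((B.mulVec_iff v).1 hv).2
    have h3 : (v 0 • y + N.mulVec (Fin.tail v)) ⬝ᵥ u = 0 := by rw [h2]; simp
    rw [add_dotProduct, smul_dotProduct, dotProduct_comm (N.mulVec _) u, Matrix.dotProduct_mulVec,
      ← Matrix.mulVec_transpose, B.sym, hu, zero_dotProduct, add_zero, smul_eq_mul] at h3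
    exact (mul_eq_zero.1 h3).resolve_right hy
  have hsub : Submodule.map (tailL n) K ≤ L := by
    rintro _ ⟨v, hv, rfl⟩
    have hv' : N'.mulVec v = 0 := hv
    have := ((B.mulVec_iff v).1 hv').2
    rw [hz v hv', zero_smul, zero_add] at this
    exact this
  have hlt : Submodule.map (tailL n) K < L := by
    refine lt_of_le_of_ne hsub ?_
    intro e
    have : u ∈ Submodule.map (tailL n) K := by rw [e]; exact hu
    obtain ⟨v, hv, hvu⟩ := this
    have hv' : N'.mulVec v = 0 := hv
    have h1 := ((B.mulVec_iff v).1 hv').1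
    have hvu' : Fin.tail v = u := hvu
    rw [hz v hv', mul_zero, zero_add, hvu'] at h1
    exact hy h1
  have h1 := Submodule.finrank_lt_finrank_of_lt hlt
  have h2 : Module.finrank (ZMod p) K ≤ Module.finrank (ZMod p) (Submodule.map (tailL n) K) := by
    let g : K →ₗ[ZMod p] Submodule.map (tailL n) K :=
      LinearMap.codRestrict _ ((tailL n).comp K.subtype) (by
        rintro ⟨v, hv⟩
        exact ⟨v, hv, rfl⟩)
    apply LinearMap.finrank_le_finrank_of_injective (f := g)
    rintro ⟨v, hv⟩ ⟨v', hv'⟩ h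
    have e1 : Fin.tail v = Fin.tail v' := congrArg Subtype.val h
    have := tail_inj ((hz v hv).trans (hz v' hv').symm) e1
    subst this
    rfl
  exact lt_of_le_of_lt h2 h1

lemma Bord.crk_pos_iff_quad (B : Bord N' N a y) (hd : N.det ≠ 0) :
    1 ≤ crk N' ↔ y ⬝ᵥ N⁻¹.mulVec y = a := by
  have hu : IsUnit N.det := Ne.isUnit hd
  rw [crk_pos_iff, ← Matrix.exists_mulVec_eq_zero_iff]
  constructor
  · rintro ⟨v, hv, h⟩
    obtain ⟨h1, h2⟩ := (B.mulVec_iff v).1 h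
    have h3 : Fin.tail v = - (v 0 • N⁻¹.mulVec y) := by
      have := congrArg (N⁻¹.mulVec) h2
      rw [Matrix.mulVec_add, Matrix.mulVec_mulVec, Matrix.nonsing_inv_mul _ hu, Matrix.one_mulVec,
        Matrix.mulVec_smul, Matrix.mulVec_zero] at this
      exact eq_neg_of_add_eq_zero_right this
    have h4 : v 0 ≠ 0 := by
      intro h0
      apply hv
      apply tail_inj (by simpa using h0)
      rw [h3, h0, zero_smul, neg_zero]; rfl
    rw [h3, dotProduct_neg, dotProduct_smul, smul_eq_mul] at h1
    have h5 : v 0 * (y ⬝ᵥ N⁻¹.mulVec y - a) = 0 := by linear_combination -h1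
    exact sub_eq_zero.1 ((mul_eq_zero.1 h5).resolve_left h4)
  · intro h
    refine ⟨Fin.cons 1 (- N⁻¹.mulVec y), ?_, ?_⟩
    · intro e
      have := congrFun e 0
      simp at this
    · rw [B.mulVec_iff]
      simp only [Fin.cons_zero, Fin.tail_cons]
      constructor
      · rw [dotProduct_neg, h]; ring
      · rw [Matrix.mulVec_neg, Matrix.mulVec_mulVec, Matrix.mul_nonsing_inv _ hu, Matrix.one_mulVec]; simp

def splitEquiv (n : ℕ) : (Fin (n+1) → Fin (n+1) → Bool) ≃
    (Fin n → Fin n → Bool) × ((Bool × (Fin n → Bool)) × (Fin n → Bool)) where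
  toFun ω := (fun i j => ω i.succ j.succ, ((ω 0 0, fun j => ω 0 j.succ), fun i => ω i.succ 0))
  invFun q := Fin.cons (Fin.cons q.2.1.1 q.2.1.2) (fun i => Fin.cons (q.2.2 i) (q.1 i))
  left_inv ω := by
    funext i j
    refine Fin.cases ?_ (fun i => ?_) i <;> refine Fin.cases ?_ (fun j => ?_) j <;> simp
  right_inv q := by
    simp

lemma expect_split (n : ℕ) (f : (Fin n → Fin n → Bool) → Bool → (Fin n → Bool) → ℝ) :
    𝔼 ω : Fin (n+1) → Fin (n+1) → Bool, f (fun i j => ω i.succ j.succ) (ω 0 0) (fun j => ω 0 j.succ) =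
    𝔼 ω', 𝔼 b, 𝔼 y, f ω' b y := by
  refine (Fintype.expect_equiv (splitEquiv n) _ (fun q => f q.1 q.2.1.1 q.2.1.2) (fun ω => rfl)).trans ?_
  rw [expect_prod_univ]
  apply expect_congr rfl
  intro ω' _
  rw [expect_prod_univ (fun b : (Bool × (Fin n → Bool)) × (Fin n → Bool) => f ω' b.1.1 b.1.2)]
  simp only [expect_const univ_nonempty]
  rw [expect_prod_univ (fun b : Bool × (Fin n → Bool) => f ω' b.1 b.2)]

lemma shM_transpose {n : ℕ} (lam : ZMod p) (ω : Fin n → Fin n → Bool) : (shM lam ω).transpose = shM lam ω := by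
  ext i j
  exact shM_symm lam ω j i

lemma shM_bord {n : ℕ} (lam : ZMod p) (ω : Fin (n+1) → Fin (n+1) → Bool) :
    Bord (shM lam ω) (shM lam (fun i j => ω i.succ j.succ)) (sg (ω 0 0) - lam) (sv fun j => ω 0 j.succ) where
  h00 := by simp [shM, symMat]
  h0s j := by simp [shM, symMat, sv, Matrix.one_apply, (Fin.succ_ne_zero j).symm]
  hs0 j := by simp [shM, symMat, sv, Matrix.one_apply, (Fin.succ_ne_zero j)]
  hss i j := by
    have h1 : min i.succ j.succ = (min i j).succ := (Fin.strictMono_succ.monotone.map_min).symm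
    have h2 : max i.succ j.succ = (max i j).succ := (Fin.strictMono_succ.monotone.map_max).symm
    simp [shM, symMat, Matrix.one_apply, h1, h2]
  sym := shM_transpose _ _
end

open Finset
noncomputable section
open scoped BigOperators

variable {p : ℕ} [Fact p.Prime]

def bM {n : ℕ} (N : Matrix (Fin n) (Fin n) (ZMod p)) (a : ZMod p) (y : Fin n → ZMod p) :
    Matrix (Fin (n+1)) (Fin (n+1)) (ZMod p) :=
  Matrix.of (Fin.cons (Fin.cons a y) (fun i => Fin.cons (y i) (N i)) : Fin (n+1) → Fin (n+1) → ZMod p)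

lemma bM_bord {n : ℕ} (N : Matrix (Fin n) (Fin n) (ZMod p)) (hN : N.transpose = N) (a : ZMod p) (y : Fin n → ZMod p) :
    Bord (bM N a y) N a y where
  h00 := by simp [bM]
  h0s j := by simp [bM]
  hs0 j := by simp [bM]
  hss i j := by simp [bM]
  sym := hN

lemma Bord.eq_bM {n : ℕ} {N' : Matrix (Fin (n+1)) (Fin (n+1)) (ZMod p)} {N : Matrix (Fin n) (Fin n) (ZMod p)}
    {a : ZMod p} {y : Fin n → ZMod p} (B : Bord N' N a y) : N' = bM N a y := by
  ext i j
  refine Fin.cases ?_ (fun i => ?_) i <;> refine Fin.cases ?_ (fun j => ?_) j <;>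
    simp [bM, B.h00, B.h0s, B.hs0, B.hss]

lemma Pr_split {n : ℕ} (lam : ZMod p) (E : Matrix (Fin (n+1)) (Fin (n+1)) (ZMod p) → Prop) :
    Pr (fun ω : Fin (n+1) → Fin (n+1) → Bool => E (shM lam ω)) =
    𝔼 ω' : Fin n → Fin n → Bool, 𝔼 b : Bool, Pr (fun y : Fin n → Bool => E (bM (shM lam ω') (sg b - lam) (sv y))) := by
  classical
  unfold Pr
  rw [← expect_split n (fun ω' b y => if E (bM (shM lam ω') (sg b - lam) (sv y)) then (1:ℝ) else 0)]
  apply expect_congr rfl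
  intro ω _
  beta_reduce
  rw [← (shM_bord lam ω).eq_bM]

section cond
variable {n l : ℕ} {N : Matrix (Fin n) (Fin n) (ZMod p)} (hp : p ≠ 2) (h : 4 * l ≤ n) (hpl : p ≤ 2 ^ l)
  (hG : Good l N) (hs : N.transpose = N) (a : ZMod p)
include hp h hpl hG hs

omit hp h in
lemma cond_pos (hc : 1 ≤ crk N) : 
    Pr (fun y : Fin n → Bool => crk N ≤ crk (bM N a (sv y))) ≤ 2 / p := by
  obtain ⟨v, hv, hv0⟩ := Matrix.exists_mulVec_eq_zero_iff.2 ((crk_pos_iff N).1 hc)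
  refine le_trans (Pr_mono ?_) (Good_ker hG v hv hv0 hpl 0)
  intro y hy
  by_contra hne
  exact absurd ((bM_bord N hs a (sv y)).crk_lt v hv0 hne) (not_lt.2 hy)

lemma cond_zero (hc : crk N = 0) :
    |Pr (fun y : Fin n → Bool => 1 ≤ crk (bM N a (sv y))) - 1 / p| ≤ 2 / p ^ 2 := by
  have hd : N.det ≠ 0 := by
    intro hd
    have := (crk_pos_iff N).2 hd
    omega
  rw [Pr_congr (fun y => (bM_bord N hs a (sv y)).crk_pos_iff_quad hd)]
  exact quad_close hp h hpl hG hs hd a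

lemma cond_zero' (hc : crk N = 0) :
    Pr (fun y : Fin n → Bool => 1 ≤ crk (bM N a (sv y))) ≤ 2 / p := by
  have h1 := (abs_le.1 (cond_zero hp h hpl hG hs a hc)).2
  have hp2 : 3 ≤ p := by
    have := (Fact.out : p.Prime).two_le
    omega
  have hp0 : (3:ℝ) ≤ p := by exact_mod_cast hp2
  have : (2:ℝ) / p ^ 2 ≤ 1 / p := by
    rw [div_le_div_iff₀ (by positivity) (by positivity)]
    nlinarith
  have e : (2:ℝ) / p = 1 / p + 1 / p := by ring
  linarith
end cond

open Classical in
lemma step_pt (hp : p ≠ 2) {n l : ℕ} (h : 4 * l ≤ n) (hpl : p ≤ 2 ^ l) {N : Matrix (Fin n) (Fin n) (ZMod p)}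
    (hs : N.transpose = N) (a : ZMod p) (j : ℕ) (hj : 1 ≤ j) :
    Pr (fun y : Fin n → Bool => j ≤ crk (bM N a (sv y))) ≤
      (if ¬ Good l N then (1:ℝ) else 0) + (2 / p) * (if j - 1 ≤ crk N then (1:ℝ) else 0)
        + (if j + 1 ≤ crk N then (1:ℝ) else 0) := by
  have h2 : (0:ℝ) ≤ 2 / p := by positivity
  have n1 : (0:ℝ) ≤ (if ¬ Good l N then (1:ℝ) else 0) := by split_ifs <;> norm_num
  have n2 : (0:ℝ) ≤ (if j - 1 ≤ crk N then (1:ℝ) else 0) := by split_ifs <;> norm_num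
  have n3 : (0:ℝ) ≤ (if j + 1 ≤ crk N then (1:ℝ) else 0) := by split_ifs <;> norm_num
  have n4 := mul_nonneg h2 n2
  have hle := Pr_le_one (fun y : Fin n → Bool => j ≤ crk (bM N a (sv y)))
  by_cases hG : Good l N
  swap
  · rw [if_pos hG]; linarith
  by_cases hc : j + 1 ≤ crk N
  · rw [if_pos hc]; linarith
  by_cases hc2 : j - 1 ≤ crk N
  · rw [if_pos hc2]
    have : Pr (fun y : Fin n → Bool => j ≤ crk (bM N a (sv y))) ≤ 2 / p := by
      rcases Nat.eq_zero_or_pos (crk N) with h0 | h0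
      · have : j = 1 := by omega
        subst this
        exact cond_zero' hp h hpl hG hs a h0
      · refine le_trans (Pr_mono ?_) (cond_pos hpl hG hs a h0)
        intro y hy
        omega
    linarith
  · have : Pr (fun y : Fin n → Bool => j ≤ crk (bM N a (sv y))) ≤ 0 := by
      apply le_of_eq
      unfold Pr
      apply expect_eq_zero
      intro y _
      rw [if_neg]
      have := (bM_bord N hs a (sv y)).crk_le_succ
      omega
    linarith

def qq (lam : ZMod p) (m j : ℕ) : ℝ := Pr (fun ω : Fin m → Fin m → Bool => j ≤ crk (shM lam ω))

lemma qq_step (hp : p ≠ 2) {n l : ℕ} (h : 4 * l ≤ n) (hpl : p ≤ 2 ^ l) (lam : ZMod p) (j : ℕ) (hj : 1 ≤ j) :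
    qq lam (n+1) j ≤ Pr (fun ω : Fin n → Fin n → Bool => ¬ Good l (shM lam ω)) + (2/p) * qq lam n (j-1)
      + qq lam n (j+1) := by
  classical
  unfold qq
  rw [Pr_split lam (fun M => j ≤ crk M)]
  refine (expect_le_expect fun ω' _ => expect_le univ_nonempty fun b _ => 
    step_pt hp h hpl (shM_transpose lam ω') (sg b - lam) j hj).trans ?_
  rw [expect_add_distrib, expect_add_distrib, ← mul_expect]
  unfold Pr
  apply le_of_eq
  congr! 

open Classical in
lemma final_pt (hp : p ≠ 2) {n l : ℕ} (h : 4 * l ≤ n) (hpl : p ≤ 2 ^ l) {N : Matrix (Fin n) (Fin n) (ZMod p)}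
    (hs : N.transpose = N) (a : ZMod p) :
    |Pr (fun y : Fin n → Bool => 1 ≤ crk (bM N a (sv y))) - 1 / p| ≤
      (if ¬ Good l N then (1:ℝ) else 0) + (2 / p) * (if 1 ≤ crk N then (1:ℝ) else 0)
        + (if 2 ≤ crk N then (1:ℝ) else 0) + 2 / p ^ 2 := by
  have h2 : (0:ℝ) ≤ 2 / p := by positivity
  have h3 : (0:ℝ) ≤ 2 / p ^ 2 := by positivity
  have n1 : (0:ℝ) ≤ (if ¬ Good l N then (1:ℝ) else 0) := by split_ifs <;> norm_num
  have n2 : (0:ℝ) ≤ (if 1 ≤ crk N then (1:ℝ) else 0) := by split_ifs <;> norm_num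
  have n3 : (0:ℝ) ≤ (if 2 ≤ crk N then (1:ℝ) else 0) := by split_ifs <;> norm_num
  have n4 := mul_nonneg h2 n2
  have hp1 : (1:ℝ) ≤ p := by exact_mod_cast (Fact.out : p.Prime).one_le
  have hpi : (1:ℝ) / p ≤ 1 := by rw [div_le_one (by linarith)]; exact hp1
  have hpi0 : (0:ℝ) ≤ 1 / p := by positivity
  have e : (2:ℝ) / p = 1 / p + 1 / p := by ring
  have hle := Pr_le_one (fun y : Fin n → Bool => 1 ≤ crk (bM N a (sv y)))
  have hge := Pr_nonneg (fun y : Fin n → Bool => 1 ≤ crk (bM N a (sv y)))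
  by_cases hG : Good l N
  swap
  · rw [if_pos hG, abs_le]; constructor <;> linarith
  by_cases hc : 2 ≤ crk N
  · rw [if_pos hc, abs_le]; constructor <;> linarith
  rcases Nat.eq_zero_or_pos (crk N) with h0 | h0
  · have := cond_zero hp h hpl hG hs a h0
    linarith
  · have h1 : crk N = 1 := by omega
    have := cond_pos hpl hG hs a h0
    rw [h1] at this
    rw [if_pos (by omega : 1 ≤ crk N), abs_le] at *
    constructor <;> linarith

lemma final_step (hp : p ≠ 2) {n l : ℕ} (h : 4 * l ≤ n) (hpl : p ≤ 2 ^ l) (lam : ZMod p) :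
    |qq lam (n+1) 1 - 1 / p| ≤ Pr (fun ω : Fin n → Fin n → Bool => ¬ Good l (shM lam ω)) + (2/p) * qq lam n 1
      + qq lam n 2 + 2 / p ^ 2 := by
  classical
  have key : ∀ (ω' : Fin n → Fin n → Bool) (b : Bool), _ := fun ω' b => abs_le.1 (final_pt hp h hpl (shM_transpose lam ω') (sg b - lam))
  have e : qq lam (n+1) 1 = _ := Pr_split lam (fun M => 1 ≤ crk M)
  rw [e]
  have e2 : Pr (fun ω : Fin n → Fin n → Bool => ¬ Good l (shM lam ω)) + (2/p) * qq lam n 1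
      + qq lam n 2 + 2 / p ^ 2 = 𝔼 ω : Fin n → Fin n → Bool, ((if ¬ Good l (shM lam ω) then (1:ℝ) else 0) + (2 / p) * (if 1 ≤ crk (shM lam ω) then (1:ℝ) else 0)
        + (if 2 ≤ crk (shM lam ω) then (1:ℝ) else 0) + 2 / p ^ 2) := by
    rw [expect_add_distrib, expect_add_distrib, expect_add_distrib, ← mul_expect, expect_const univ_nonempty]
    unfold qq Pr
    congr!
  rw [e2, abs_le]
  constructor
  · rw [neg_le_sub_iff_le_add, ← sub_le_iff_le_add]
    rw [← expect_const (s := (univ : Finset (Fin n → Fin n → Bool))) univ_nonempty (1 / (p:ℝ)), ← expect_sub_distrib]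
    apply expect_le_expect
    intro ω' _
    apply le_expect univ_nonempty
    intro b _
    have := (key ω' b).1
    linarith
  · rw [sub_le_iff_le_add]
    rw [← expect_const (s := (univ : Finset (Fin n → Fin n → Bool))) univ_nonempty (1 / (p:ℝ)), ← expect_add_distrib]
    apply expect_le_expect
    intro ω' _
    apply expect_le univ_nonempty
    intro b _
    have := (key ω' b).2
    linarith

lemma chain (hp : 256 ≤ p) {l n0 : ℕ} (h : 4 * l ≤ n0) (hpl : p ≤ 2 ^ l) (lam : ZMod p) (β : ℝ) (hβ : 0 ≤ β) (I : ℕ)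
    (hb : ∀ i < I, Pr (fun ω : Fin (n0 + i) → Fin (n0 + i) → Bool => ¬ Good l (shM lam ω)) ≤ β) :
    ∀ i ≤ I, ∀ j, qq lam (n0 + i) j ≤ (4 / p) ^ j + 4 ^ n0 * (1/2) ^ i * (1/4) ^ j + 128 * β * (65/64) ^ i := by
  have hpR : (256:ℝ) ≤ p := by exact_mod_cast hp
  have hx : (1:ℝ) / p ≤ 1 / 256 := by gcongr
  have hx0 : (0:ℝ) < 1 / p := by positivity
  set x : ℝ := 1 / p with hxd
  have e4 : (4:ℝ) / p = 4 * x := by rw [hxd]; ring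
  have e2 : (2:ℝ) / p = 2 * x := by rw [hxd]; ring
  rw [e4]
  intro i
  induction i with
  | zero =>
    intro _ j
    by_cases hj : j ≤ n0
    · have h1 : qq lam (n0 + 0) j ≤ 1 := Pr_le_one _
      have h2 : (1:ℝ) ≤ 4 ^ n0 * (1/2) ^ 0 * (1/4) ^ j := by
        have : (1:ℝ) ≤ 4 ^ (n0 - j) := one_le_pow₀ (by norm_num)
        refine this.trans (le_of_eq ?_)
        have : n0 = (n0 - j) + j := by omega
        nth_rewrite 2 [this]
        rw [pow_zero, mul_one, pow_add, mul_assoc, ← mul_pow]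
        norm_num
      have h3 : 0 ≤ (4 * x) ^ j := by positivity
      have h4 : 0 ≤ 128 * β * (65/64) ^ 0 := by positivity
      linarith
    · have h1 : qq lam (n0 + 0) j = 0 := by
        unfold qq Pr
        apply expect_eq_zero
        intro ω _
        rw [if_neg]
        have := crk_le (shM lam ω)
        omega
      rw [h1]; positivity
  | succ i ih =>
    intro hi j
    have ih' := ih (by omega)
    rcases Nat.eq_zero_or_pos j with hj | hj
    · subst hj
      have h1 : qq lam (n0 + (i+1)) 0 ≤ 1 := Pr_le_one _
      have h2 : (0:ℝ) ≤ 4 ^ n0 * (1/2) ^ (i+1) * (1/4) ^ 0 := by positivity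
      have h4 : 0 ≤ 128 * β * (65/64) ^ (i+1) := by positivity
      rw [pow_zero]
      linarith
    · have hst := qq_step (by omega : p ≠ 2) (n := n0 + i) (l := l) (by omega) hpl lam j hj
      have h1 := hb i (by omega)
      have h2 := ih' (j-1)
      have h3 := ih' (j+1)
      obtain ⟨k, rfl⟩ : ∃ k, j = k + 1 := ⟨j - 1, by omega⟩
      rw [Nat.add_sub_cancel] at hst h2
      rw [e2] at hst
      refine hst.trans ?_
      have a1 : 2 * x * (4 * x) ^ k + (4 * x) ^ (k + 1 + 1) ≤ (4 * x) ^ (k + 1) := by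
        have : 0 ≤ (4 * x) ^ k * x := by positivity
        rw [pow_succ, pow_succ]
        nlinarith
      have a2 : 2 * x * (4 ^ n0 * (1/2) ^ i * (1/4) ^ k) + 4 ^ n0 * (1/2) ^ i * (1/4) ^ (k+1+1) ≤
          4 ^ n0 * (1/2) ^ (i+1) * (1/4) ^ (k+1) := by
        have : (0:ℝ) ≤ 4 ^ n0 * (1/2) ^ i * (1/4) ^ k := by positivity
        rw [pow_succ, pow_succ, pow_succ]
        nlinarith
      have a3 : β + 2 * x * (128 * β * (65/64) ^ i) + 128 * β * (65/64) ^ i ≤ 128 * β * (65/64) ^ (i+1) := by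
        have g1 : (1:ℝ) ≤ (65/64) ^ i := one_le_pow₀ (by norm_num)
        have g2 : β ≤ β * (65/64) ^ i := le_mul_of_one_le_right hβ g1
        rw [pow_succ]
        nlinarith
      have h2' := mul_le_mul_of_nonneg_left h2 (by positivity : 0 ≤ 2 * x)
      have : 2 * x * ((4 * x) ^ k + 4 ^ n0 * (1/2) ^ i * (1/4) ^ k + 128 * β * (65/64) ^ i) = 
        2 * x * (4 * x) ^ k + 2 * x * (4 ^ n0 * (1/2) ^ i * (1/4) ^ k) + 2 * x * (128 * β * (65/64) ^ i) := by ring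
      have e5 : n0 + (i + 1) = n0 + i + 1 := rfl
      linarith
end

open Finset
noncomputable section
open scoped BigOperators

variable {p : ℕ} [Fact p.Prime]

lemma two_half {a b c : ℕ} (h : a + c ≤ b) : (2:ℝ)^a * (1/2)^b ≤ (1/2)^c := by
  calc (2:ℝ)^a * (1/2)^b ≤ 2^a * (1/2)^(a+c) := by
        gcongr ?_ * ?_
        exact pow_le_pow_of_le_one (by norm_num) (by norm_num) h
    _ = (1/2)^c := by
        rw [pow_add, ← mul_assoc, ← mul_pow]; norm_num

lemma main_p (hp : 256 ≤ p) {n l : ℕ} (hl : 1 ≤ l) (hpl : p ≤ 2 ^ l) (hnl : n ≤ 2 ^ l)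
    (hn : 5 * (2 ^ 40 * l ^ 4) + 5 ≤ n) (lam : ZMod p) :
    |qq lam n 1 - 1 / p| ≤ 40 / p ^ 2 := by
  have hl2 : l ≤ l ^ 4 := Nat.le_self_pow (by norm_num) l
  obtain ⟨n0, hn0⟩ : ∃ n0, n0 = n / 5 := ⟨_, rfl⟩
  obtain ⟨I, hI⟩ : ∃ I, n = n0 + I + 1 := ⟨n - 1 - n0, by omega⟩
  have hpp : p ≠ 2 := by omega
  set β : ℝ := 2 ^ (9 * l) * (1/2) ^ (n0/2) with hβ
  have hβ0 : 0 ≤ β := by positivity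
  have hgood : ∀ i ≤ I, Pr (fun ω : Fin (n0 + i) → Fin (n0 + i) → Bool => ¬ Good l (shM lam ω)) ≤ β := by
    intro i hi
    refine (Pr_not_Good hpp hl hpl (by omega) (by omega) lam).trans ?_
    rw [hβ]
    gcongr ?_ * ?_
    exact pow_le_pow_of_le_one (by norm_num) (by norm_num) (by omega)
  have hch := chain hp (l := l) (n0 := n0) (by omega) hpl lam β hβ0 I (fun i hi => hgood i hi.le) I le_rfl
  have hpR : (256:ℝ) ≤ p := by exact_mod_cast hp
  have hpl' : (p:ℝ) ≤ 2 ^ l := by exact_mod_cast hpl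
  have hhalf : (1/2:ℝ)^(2*l) ≤ 1 / p ^ 2 := by
    rw [div_pow, one_pow, mul_comm 2 l, pow_mul]
    gcongr
  have e1 : (4:ℝ) ^ n0 * (1/2) ^ I ≤ 1 / p ^ 2 := by
    refine le_trans ?_ hhalf
    rw [show (4:ℝ) = 2 ^ 2 by norm_num, ← pow_mul]
    exact two_half (by omega)
  have e2 : 128 * β * (65/64) ^ I ≤ 1 / p ^ 2 := by
    refine le_trans ?_ hhalf
    have g1 : (65/64:ℝ)^I ≤ 2 ^ (I/40 + 1) := by
      calc (65/64:ℝ)^I ≤ (65/64)^(40 * (I/40+1)) := pow_le_pow_right₀ (by norm_num) (by omega)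
        _ = ((65/64)^40) ^ (I/40+1) := by rw [pow_mul]
        _ ≤ _ := by gcongr; norm_num
    calc _ ≤ 128 * β * 2 ^ (I/40+1) := by gcongr
      _ = 2 ^ (7 + 9 * l + (I/40+1)) * (1/2)^(n0/2) := by
          rw [hβ, pow_add, pow_add]; norm_num; ring
      _ ≤ _ := two_half (by omega)
  have e3 : β ≤ 1 / p ^ 2 := by
    refine le_trans ?_ hhalf
    rw [hβ]
    exact two_half (by omega)
  have hq1 := hch 1
  have hq2 := hch 2
  have hf := final_step hpp (n := n0 + I) (l := l) (by omega) hpl lam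
  have hg := hgood I le_rfl
  rw [hI]
  refine hf.trans ?_
  set X : ℝ := 1 / p with hX
  have hX0 : 0 < X := by positivity
  have hX1 : X ≤ 1 := by rw [hX, div_le_one (by linarith)]; linarith
  have r1 : (1:ℝ) / p ^ 2 = X ^ 2 := by rw [hX, div_pow, one_pow]
  have r2 : (2:ℝ) / p ^ 2 = 2 * X ^ 2 := by rw [← r1]; ring
  have r3 : (40:ℝ) / p ^ 2 = 40 * X ^ 2 := by rw [← r1]; ring
  have r4 : (4:ℝ) / p = 4 * X := by rw [hX]; ring
  have r5 : (2:ℝ) / p = 2 * X := by rw [hX]; ring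
  rw [r1] at e1 e2 e3
  rw [r4] at hq1 hq2
  rw [r2, r3, r5]
  have hq1' : qq lam (n0 + I) 1 ≤ 4 * X + 2 * X ^ 2 := by
    have : (0:ℝ) ≤ 4 ^ n0 * (1/2) ^ I := by positivity
    linarith
  have hq2' : qq lam (n0 + I) 2 ≤ 18 * X ^ 2 := by
    have : (0:ℝ) ≤ 4 ^ n0 * (1/2) ^ I := by positivity
    linarith
  have hm := mul_le_mul_of_nonneg_left hq1' (by positivity : 0 ≤ 2 * X)
  have : X ^ 3 ≤ X ^ 2 := pow_le_pow_of_le_one hX0.le hX1 (by norm_num)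
  nlinarith

lemma pow4_le (l : ℕ) (h : 128 ≤ l) : 2 ^ 48 * l ^ 4 ≤ 2 ^ l := by
  induction l, h using Nat.le_induction with
  | base => norm_num
  | succ l h ih =>
    have h3 : 128 * l ^ 3 ≤ l ^ 4 := by
      calc 128 * l ^ 3 ≤ l * l ^ 3 := Nat.mul_le_mul_right _ h
        _ = l ^ 4 := by ring
    have h2 : l ^ 2 ≤ l ^ 3 := Nat.pow_le_pow_right (by omega) (by norm_num)
    have h1 : l ≤ l ^ 3 := Nat.le_self_pow (by norm_num) l
    have : (l + 1) ^ 4 ≤ 2 * l ^ 4 := by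
      have : (l + 1) ^ 4 = l ^ 4 + 4 * l ^ 3 + 6 * l ^ 2 + 4 * l + 1 := by ring
      omega
    calc 2 ^ 48 * (l + 1) ^ 4 ≤ 2 ^ 48 * (2 * l ^ 4) := Nat.mul_le_mul_left _ this
      _ = 2 * (2 ^ 48 * l ^ 4) := by ring
      _ ≤ 2 * 2 ^ l := Nat.mul_le_mul_left _ ih
      _ = _ := by ring

lemma count_eq (n : ℕ) [∀ ω : Fin n → Fin n → Bool, DecidablePred fun a : ℕ => (symMat (ZMod p) ω
                - (a : ZMod p) • (1 : Matrix (Fin n) (Fin n) (ZMod p))).det = 0] :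
    (∑ ω : Fin n → Fin n → Bool,
            (((Finset.range p).filter (fun a : ℕ =>
              (symMat (ZMod p) ω
                - (a : ZMod p) • (1 : Matrix (Fin n) (Fin n) (ZMod p))).det = 0)).card : ℝ))
            / (Fintype.card (Fin n → Fin n → Bool) : ℝ) = ∑ a ∈ range p, qq (a : ZMod p) n 1 := by
  classical
  unfold qq Pr
  rw [← expect_sum_comm, Fintype.expect_eq_sum_div_card]
  congr 1
  apply sum_congr rfl
  intro ω _
  rw [card_filter]
  push_cast
  apply sum_congr rfl
  intro a _
  have := crk_pos_iff (shM (a : ZMod p) ω)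
  unfold shM at this
  simp only [shM, this]
end

theorem params (n p : ℕ) (hple : (p : ℝ) ≤ Real.exp ((1/2^13) * (n : ℝ) ^ ((1 : ℝ) / 4))) :
    (p:ℝ) ≤ Real.exp 32 ∨ ∃ l, 1 ≤ l ∧ p ≤ 2 ^ l ∧ n ≤ 2 ^ l ∧ 5 * (2 ^ 40 * l ^ 4) + 5 ≤ n := by
  set s : ℝ := (n : ℝ) ^ ((1 : ℝ) / 4) with hs
  have hs0 : 0 ≤ s := by positivity
  have hs4 : s ^ 4 = n := by
    rw [hs, ← Real.rpow_natCast, ← Real.rpow_mul (by positivity)]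
    norm_num
  obtain ⟨l, hl⟩ : ∃ l, l = ⌊s / 2^11⌋₊ := ⟨_, rfl⟩
  have h1 : (l:ℝ) ≤ s / 2^11 := by rw [hl]; exact Nat.floor_le (by positivity)
  have h2 : s / 2^11 < l + 1 := by rw [hl]; exact Nat.lt_floor_add_one _
  by_cases hl128 : 128 ≤ l
  · right
    have hlR : (128:ℝ) ≤ l := by exact_mod_cast hl128
    have h3 : s ≤ 2^12 * l := by
      rw [div_lt_iff₀ (by norm_num)] at h2
      nlinarith
    refine ⟨l, by omega, ?_, ?_, ?_⟩
    · have : (p:ℝ) ≤ 2 ^ l := by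
        refine hple.trans ?_
        have : (1/2^13) * s ≤ l * Real.log 2 := by
          have := Real.log_two_gt_d9
          nlinarith
        calc _ ≤ Real.exp (l * Real.log 2) := Real.exp_le_exp.2 this
          _ = 2 ^ l := by rw [Real.exp_nat_mul, Real.exp_log (by norm_num)]
      exact_mod_cast this
    · refine le_trans ?_ (pow4_le l hl128)
      have : (n:ℝ) ≤ 2 ^ 48 * l ^ 4 := by
        rw [← hs4]
        calc s ^ 4 ≤ (2^12 * l) ^ 4 := by gcongr
          _ = _ := by ring
      exact_mod_cast this
    · have : (2 ^ 44 * l ^ 4 : ℝ) ≤ n := by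
        rw [← hs4]
        rw [le_div_iff₀ (by norm_num)] at h1
        calc _ = (l * 2^11 : ℝ) ^ 4 := by ring
          _ ≤ _ := by gcongr
      have h4 : 2 ^ 44 * l ^ 4 ≤ n := by exact_mod_cast this
      have h5 : 0 < l ^ 4 := by positivity
      omega
  · left
    refine hple.trans (Real.exp_le_exp.2 ?_)
    have hlR : (l:ℝ) + 1 ≤ 128 := by
      have : l + 1 ≤ 128 := by omega
      exact_mod_cast this
    have : s / 2 ^ 11 < 128 := by linarith
    rw [div_lt_iff₀ (by norm_num)] at this
    linarith

open Classical in
/-- The expected number of roots in `F_p` (without multiplicity) of the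
characteristic polynomial of `M_n` mod `p` is `1 + O(1/p)`, for primes
`2 < p ≤ exp(η n^{1/4})`. The elements of `F_p` are enumerated by `Finset.range p`. -/
theorem expected_number_of_roots_mod_p :
    ∃ η C : ℝ, 0 < η ∧ 0 < C ∧
      ∀ n p : ℕ, p.Prime → 2 < p →
        (p : ℝ) ≤ Real.exp (η * (n : ℝ) ^ ((1 : ℝ) / 4)) →
        |(∑ ω : Fin n → Fin n → Bool,
            (((Finset.range p).filter (fun a : ℕ =>
              (symMat (ZMod p) ω
                - (a : ZMod p) • (1 : Matrix (Fin n) (Fin n) (ZMod p))).det = 0)).card : ℝ))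
            / (Fintype.card (Fin n → Fin n → Bool) : ℝ) - 1|
          ≤ C / (p : ℝ) := by
  refine ⟨1/2^13, Real.exp 32 ^ 2 + 256 ^ 2 + 40, by positivity, by positivity, ?_⟩
  intro n p hprime hp2 hple
  have : Fact p.Prime := ⟨hprime⟩
  rw [count_eq]
  have hp0 : (2:ℝ) < p := by exact_mod_cast hp2
  have triv : ∀ B : ℝ, (p:ℝ) ≤ B → B ^ 2 ≤ Real.exp 32 ^ 2 + 256 ^ 2 + 40 →
      |∑ a ∈ range p, qq (a : ZMod p) n 1 - 1| ≤ (Real.exp 32 ^ 2 + 256 ^ 2 + 40) / (p : ℝ) := by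
    intro B hB hB2
    have h1 : ∑ a ∈ range p, qq (a : ZMod p) n 1 ≤ p := by
      refine (sum_le_sum fun (a : ℕ) _ => (Pr_le_one _ : qq (a : ZMod p) n 1 ≤ 1)).trans ?_
      simp
    have h0 : 0 ≤ ∑ a ∈ range p, qq (a : ZMod p) n 1 := sum_nonneg fun a _ => Pr_nonneg _
    have h3 : (p:ℝ) ≤ (Real.exp 32 ^ 2 + 256 ^ 2 + 40) / (p : ℝ) := by
      rw [le_div_iff₀ (by linarith)]
      nlinarith
    rw [abs_le]
    constructor <;> linarith
  rcases params n p hple with h | ⟨l, hl, hpl, hnl, hn⟩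
  · apply triv _ h
    nlinarith
  · by_cases hp256 : 256 ≤ p
    · have h1 : ∑ a ∈ range p, qq (a : ZMod p) n 1 - 1 = ∑ a ∈ range p, (qq (a : ZMod p) n 1 - 1 / p) := by
        rw [sum_sub_distrib, sum_const, card_range, nsmul_eq_mul]
        field_simp
      rw [h1]
      refine (abs_sum_le_sum_abs _ _).trans ?_
      refine (sum_le_sum fun (a : ℕ) _ => main_p hp256 hl hpl hnl hn (a : ZMod p)).trans ?_
      rw [sum_const, card_range, nsmul_eq_mul]
      have h2 : (p:ℝ) * (40 / p ^ 2) = 40 / p := by field_simp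
      rw [h2]
      gcongr
      have : 0 ≤ Real.exp 32 ^ 2 := by positivity
      linarith
    · apply triv 256
      · have : p ≤ 256 := by omega
        exact_mod_cast this
      · have : 0 ≤ Real.exp 32 ^ 2 := by positivity
        linarith
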